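/- Let K belong to the class R and contain exactly one singular vertex t. Then d(t) ≥ 8, i.e., lk(t,K) has at least 8 vertices. -/

import Mathlib

/-- An abstract simplicial complex on vertex set `ℕ`: a finite, downward closed
collection of nonempty finite sets of vertices. -/
structure SComplex where
  faces : Finset (Finset ℕ)
  not_empty_mem : ∅ ∉ faces
  down_closed : ∀ s ∈ faces, ∀ t ⊆ s, t ≠ ∅ → t ∈ faces

namespace SComplex

/-- The set of vertices of the complex. -/
def vertexSet (K : SComplex) : Finset ℕ := K.faces.sup id

/-- `fnum K i` is the number of `i`-dimensional faces of `K`. -/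
def fnum (K : SComplex) (i : ℕ) : ℕ := (K.faces.filter fun s => s.card = i + 1).card

/-- `g₂` for a 3-dimensional complex: `f₁ - 4 f₀ + 10`. -/
def g2 (K : SComplex) : ℤ := (K.fnum 1 : ℤ) - 4 * (K.fnum 0 : ℤ) + 10

/-- `g₂` for a 2-dimensional complex: `f₁ - 3 f₀ + 6`. -/
def g2surf (K : SComplex) : ℤ := (K.fnum 1 : ℤ) - 3 * (K.fnum 0 : ℤ) + 6

/-- Euler characteristic of a (2-dimensional) complex. -/
def euler (K : SComplex) : ℤ := (K.fnum 0 : ℤ) - (K.fnum 1 : ℤ) + (K.fnum 2 : ℤ)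

/-- The link of a face `σ`. -/
def lk (K : SComplex) (σ : Finset ℕ) : SComplex where
  faces := K.faces.filter fun γ => γ ∩ σ = ∅ ∧ γ ∪ σ ∈ K.faces
  not_empty_mem := fun h => K.not_empty_mem (Finset.mem_filter.mp h).1
  down_closed := by
    intro s hs t hts ht
    rw [Finset.mem_filter] at hs ⊢
    refine ⟨K.down_closed s hs.1 t hts ht, ?_, ?_⟩
    · have h1 : t ∩ σ ⊆ s ∩ σ := Finset.inter_subset_inter hts (Finset.Subset.refl σ)
      rw [hs.2.1] at h1
      exact Finset.subset_empty.mp h1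
    · refine K.down_closed (s ∪ σ) hs.2.2 (t ∪ σ)
        (Finset.union_subset_union hts (Finset.Subset.refl σ)) ?_
      intro hc
      exact ht (Finset.union_eq_empty.mp hc).1

/-- The (closed) star of a face `σ`. -/
def st (K : SComplex) (σ : Finset ℕ) : SComplex where
  faces := K.faces.filter fun α => α ∪ σ ∈ K.faces
  not_empty_mem := fun h => K.not_empty_mem (Finset.mem_filter.mp h).1
  down_closed := by
    intro s hs t hts ht
    rw [Finset.mem_filter] at hs ⊢
    refine ⟨K.down_closed s hs.1 t hts ht, ?_⟩
    refine K.down_closed (s ∪ σ) hs.2 (t ∪ σ)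
      (Finset.union_subset_union hts (Finset.Subset.refl σ)) ?_
    intro hc
    exact ht (Finset.union_eq_empty.mp hc).1

/-- A facet is a maximal face. -/
def IsFacet (K : SComplex) (s : Finset ℕ) : Prop :=
  s ∈ K.faces ∧ ∀ t ∈ K.faces, s ⊆ t → s = t

/-- A pure `d`-dimensional complex: all facets have `d+1` vertices. -/
def IsPure (K : SComplex) (d : ℕ) : Prop :=
  K.faces.Nonempty ∧ ∀ s, K.IsFacet s → s.card = d + 1

/-- Two facets are adjacent if they share a codimension-one face. -/
def FacetAdj (K : SComplex) (s t : Finset ℕ) : Prop :=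
  K.IsFacet s ∧ K.IsFacet t ∧ (s ∩ t).card + 1 = s.card

/-- Strong connectedness: any two facets are joined by a chain of facets, consecutive
ones sharing a codimension-one face. -/
def StronglyConnected (K : SComplex) : Prop :=
  ∀ s t, K.IsFacet s → K.IsFacet t → Relation.ReflTransGen K.FacetAdj s t

/-- Two vertices are adjacent if they span an edge. -/
def VertAdj (K : SComplex) (u v : ℕ) : Prop := ({u, v} : Finset ℕ) ∈ K.faces

/-- Connectedness of a complex (via its 1-skeleton). -/
def Conn (K : SComplex) : Prop :=
  K.faces.Nonempty ∧
    ∀ u v, {u} ∈ K.faces → {v} ∈ K.faces → Relation.ReflTransGen K.VertAdj u v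

/-- A normal `d`-pseudomanifold: pure, strongly connected, every `(d-1)`-face is in
exactly two facets, and links of faces of dimension at most `d-2` are connected. -/
def IsNormalPseudomanifold (K : SComplex) (d : ℕ) : Prop :=
  K.IsPure d ∧ K.StronglyConnected ∧
    (∀ s ∈ K.faces, s.card = d →
      (K.faces.filter fun F => F.card = d + 1 ∧ s ⊆ F).card = 2) ∧
    (∀ s ∈ K.faces, s.card ≤ d - 1 → (K.lk s).Conn)

/-- The geometric realization `|K|`, as a subspace of `ℕ → ℝ`. -/
def realSpace (K : SComplex) : Set (ℕ → ℝ) :=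
  {w | (∀ v, 0 ≤ w v) ∧ ∃ s ∈ K.faces, (∀ v, w v ≠ 0 → v ∈ s) ∧ ∑ v ∈ s, w v = 1}

/-- The link of the vertex `v` triangulates the `(d-1)`-sphere. -/
def HasSphereLink (K : SComplex) (d : ℕ) (v : ℕ) : Prop :=
  Nonempty (↥((K.lk {v}).realSpace) ≃ₜ
    ↥(Metric.sphere (0 : EuclideanSpace ℝ (Fin d)) 1))

/-- A singular vertex of a normal 3-pseudomanifold: its link is not a 2-sphere. -/
def IsSingular (K : SComplex) (v : ℕ) : Prop :=
  {v} ∈ K.faces ∧ ¬ K.HasSphereLink 3 v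

/-- `d(σ)`: the number of vertices of the link of `σ`. -/
def deg (K : SComplex) (σ : Finset ℕ) : ℕ := (K.lk σ).fnum 0

/-- The boundary complex of the simplex on vertex set `s`: all nonempty proper subsets. -/
def properFaces (s : Finset ℕ) : Finset (Finset ℕ) :=
  s.powerset.filter fun t => t ≠ ∅ ∧ t ≠ s

/-- All nonempty faces of the simplex on vertex set `s`. -/
def simplexFaces (s : Finset ℕ) : Finset (Finset ℕ) :=
  s.powerset.filter fun t => t ≠ ∅

/-- Operation (A): a bistellar 2-move on an edge `uv` with `lk(uv) = ∂(abc)`, `abc ∉ K`. -/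
def BistellarTwoMove (K K' : SComplex) : Prop :=
  ∃ u v a b c : ℕ,
    ({u, v} : Finset ℕ) ∈ K.faces ∧ u ≠ v ∧
    ({a, b, c} : Finset ℕ).card = 3 ∧
    u ∉ ({a, b, c} : Finset ℕ) ∧ v ∉ ({a, b, c} : Finset ℕ) ∧
    (K.lk {u, v}).faces = properFaces {a, b, c} ∧
    ({a, b, c} : Finset ℕ) ∉ K.faces ∧
    K'.faces = ((K.faces.filter fun α => ¬ ({u, v} : Finset ℕ) ⊆ α) ∪
      simplexFaces (insert u {a, b, c})) ∪ simplexFaces (insert v {a, b, c})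

/-- The faces of the boundary complex of a pure `d`-dimensional complex with face set `F`:
faces contained in some `(d-1)`-face lying in exactly one facet. -/
def bdryFaces (F : Finset (Finset ℕ)) (d : ℕ) : Finset (Finset ℕ) :=
  F.filter fun s => ∃ r ∈ F, s ⊆ r ∧ r.card = d ∧
    (F.filter fun t => t.card = d + 1 ∧ r ⊆ t).card = 1

/-- The faces of the cone with apex `w` over the complex with face set `F`. -/
def coneFaces (w : ℕ) (F : Finset (Finset ℕ)) : Finset (Finset ℕ) :=
  (F ∪ F.image (insert w)) ∪ {{w}}

/-- `K₁` is obtained from the normal `d`-pseudomanifold `K` by contracting the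
edge `uv` (satisfying the link condition): delete all faces containing `u` or `v`
and cone off the boundary of the result with a new vertex `w`. -/
def EdgeContractionAt (d : ℕ) (K : SComplex) (u v : ℕ) (K₁ : SComplex) : Prop :=
  ({u, v} : Finset ℕ) ∈ K.faces ∧ u ≠ v ∧
  (K.lk {u}).faces ∩ (K.lk {v}).faces = (K.lk {u, v}).faces ∧
  ∃ w, w ∉ K.vertexSet ∧
    K₁.faces = (K.faces.filter fun α => u ∉ α ∧ v ∉ α) ∪
      coneFaces w (bdryFaces (K.faces.filter fun α => u ∉ α ∧ v ∉ α) d)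

/-- Operation (B): an edge contraction in a 3-dimensional complex. -/
def EdgeContraction (K K₁ : SComplex) : Prop := ∃ u v, EdgeContractionAt 3 K u v K₁

/-- The class `R`: normal 3-pseudomanifolds with one or two singular vertices such that
(i) if `K` contains the boundary of a 3-simplex then it contains the 3-simplex and
(ii) no normal 3-pseudomanifold with smaller `g₂` is obtained from `K` by a
bistellar 2-move, an edge contraction, an edge expansion followed by a bistellar
2-move, or an edge expansion followed by an edge contraction. -/
def InClassR (K : SComplex) : Prop :=
  K.IsNormalPseudomanifold 3 ∧
  1 ≤ {v | K.IsSingular v}.ncard ∧ {v | K.IsSingular v}.ncard ≤ 2 ∧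
  (∀ s : Finset ℕ, s.card = 4 → (∀ t ∈ properFaces s, t ∈ K.faces) → s ∈ K.faces) ∧
  (∀ K' : SComplex, K'.IsNormalPseudomanifold 3 →
    (BistellarTwoMove K K' ∨ EdgeContraction K K' ∨
      (∃ M, EdgeContraction M K ∧ BistellarTwoMove M K') ∨
      (∃ M, EdgeContraction M K ∧ EdgeContraction M K')) →
    K.g2 ≤ K'.g2)

/-!
Let `L = lk t` and suppose that `L` has `n ≤ 7` vertices. If `n ≥ 5` and some vertex `v` were
adjacent in `L` to all the others, then the absence of missing tetrahedra would give `tv` the link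
condition, and contracting `tv` would lower `g₂` by at least `d(tv) - 3 = n - 4 > 0`. So every
vertex of `L` has degree at most `n - 2` once `n ≥ 5`; as `3 χ(L) = 3 f₀ - f₁`, counting edges
gives `χ(L) ≥ 2`.

Such a surface is a sphere, by induction on its edges. Some vertex `v` has degree at most four, and
unless `L` is the boundary of a tetrahedron, `v` is the centre of a stellar subdivision, of a
missing triangle or of a missing edge: the two diagonals of a quadrilateral link cannot both be
edges, because `χ(L) ≥ 2` makes every cycle modulo two bound, hence every `3`-cycle separate.
Contracting an edge at `v` undoes the subdivision without changing the homeomorphism type.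
-/

/-! ### Links -/

section Link

variable {K : SComplex} {s u : Finset ℕ} {x y z : ℕ}

theorem mem_faces_of_subset (hs : s ∈ K.faces) (hus : u ⊆ s) (hu : u.Nonempty) : u ∈ K.faces :=
  K.down_closed s hs u hus hu.ne_empty

theorem nonempty_of_mem_faces (hs : s ∈ K.faces) : s.Nonempty :=
  Finset.nonempty_iff_ne_empty.mpr fun h ↦ K.not_empty_mem (h ▸ hs)

theorem mem_lk : u ∈ (K.lk s).faces ↔ u.Nonempty ∧ Disjoint u s ∧ u ∪ s ∈ K.faces := by
  simp only [lk, Finset.mem_filter, ← Finset.disjoint_iff_inter_eq_empty]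
  exact ⟨fun h ↦ ⟨nonempty_of_mem_faces h.1, h.2⟩,
    fun h ↦ ⟨mem_faces_of_subset h.2.2 Finset.subset_union_left h.1, h.2⟩⟩

theorem singleton_mem_lk : {z} ∈ (K.lk s).faces ↔ z ∉ s ∧ insert z s ∈ K.faces := by
  simp [mem_lk]

theorem vertAdj_lk :
    (K.lk s).VertAdj x y ↔ x ∉ s ∧ y ∉ s ∧ insert x (insert y s) ∈ K.faces := by
  simp [VertAdj, mem_lk, and_assoc, Finset.insert_union]

theorem VertAdj.symm (h : K.VertAdj x y) : K.VertAdj y x := by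
  rwa [VertAdj, Finset.pair_comm]

theorem VertAdj.left (h : K.VertAdj x y) : {x} ∈ K.faces :=
  mem_faces_of_subset h (by simp) (by simp)

theorem VertAdj.right (h : K.VertAdj x y) : {y} ∈ K.faces := h.symm.left

theorem IsFacet.vertAdj (hF : K.IsFacet s) (hx : x ∈ s) (hy : y ∈ s) : K.VertAdj x y :=
  mem_faces_of_subset hF.1 (by grind) (by simp)

end Link

theorem exists_insert_of_subset {s F : Finset ℕ} (h : s ⊆ F) (hc : F.card = s.card + 1) :
    ∃ x ∉ s, insert x s = F :=
  Finset.covBy_iff_exists_insert.mp <| Finset.covBy_iff_card_sdiff_eq_one.mpr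
    ⟨h, by rw [Finset.card_sdiff_of_subset h]; lia⟩

/-! ### Normal pseudomanifolds -/

/-- A normal `d`-pseudomanifold described through links only: the links of faces of codimension
one consist of two points, and all other links, that of `∅` included, are connected. -/
structure IsLinkNormal (K : SComplex) (d : ℕ) : Prop where
  nonempty : K.faces.Nonempty
  exists_superset : ∀ s ∈ K.faces, ∃ F ∈ K.faces, s ⊆ F ∧ F.card = d + 1
  exists_opposite : ∀ s ∈ K.faces, s.card = d →
    ∃ x y, x ≠ y ∧ ∀ z, {z} ∈ (K.lk s).faces ↔ z = x ∨ z = y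
  connected : ∀ s : Finset ℕ, s.card < d → ∀ x y, {x} ∈ (K.lk s).faces → {y} ∈ (K.lk s).faces →
    Relation.ReflTransGen (K.lk s).VertAdj x y

/-- Adjacency of facets within the star of `σ`. -/
def StarAdj (K : SComplex) (σ F G : Finset ℕ) : Prop :=
  K.FacetAdj F G ∧ σ ⊆ F ∧ σ ⊆ G

theorem StarAdj.mono {K : SComplex} {σ τ F G : Finset ℕ} (hτσ : τ ⊆ σ) (h : K.StarAdj σ F G) :
    K.StarAdj τ F G :=
  ⟨h.1, hτσ.trans h.2.1, hτσ.trans h.2.2⟩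

section LinkNormal

variable {K : SComplex} {d : ℕ}

theorem IsLinkNormal.isFacet_iff (h : K.IsLinkNormal d) {F : Finset ℕ} :
    K.IsFacet F ↔ F ∈ K.faces ∧ F.card = d + 1 := by
  refine ⟨fun hF ↦ ?_, fun ⟨hF, hc⟩ ↦ ⟨hF, fun G hG hFG ↦ ?_⟩⟩
  · obtain ⟨G, hG, hFG, hc⟩ := h.exists_superset F hF.1
    exact ⟨hF.1, hF.2 G hG hFG ▸ hc⟩
  · obtain ⟨H, -, hGH, hcH⟩ := h.exists_superset G hG
    exact Finset.eq_of_subset_of_card_le hFG <| hc ▸ hcH ▸ Finset.card_le_card hGH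

theorem IsLinkNormal.exists_facet (h : K.IsLinkNormal d) {s : Finset ℕ} (hs : s ∈ K.faces) :
    ∃ F, K.IsFacet F ∧ s ⊆ F :=
  let ⟨F, hF, hsF, hc⟩ := h.exists_superset s hs
  ⟨F, h.isFacet_iff.mpr ⟨hF, hc⟩, hsF⟩

theorem IsLinkNormal.card_le (h : K.IsLinkNormal d) {s : Finset ℕ} (hs : s ∈ K.faces) :
    s.card ≤ d + 1 :=
  let ⟨_, _, hsF, hc⟩ := h.exists_superset s hs
  hc ▸ Finset.card_le_card hsF

theorem IsLinkNormal.exists_mem_lk (h : K.IsLinkNormal d) {s : Finset ℕ}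
    (hs : s = ∅ ∨ s ∈ K.faces) (hc : s.card ≤ d) : ∃ x, {x} ∈ (K.lk s).faces := by
  obtain ⟨F, hF, hsF⟩ : ∃ F, K.IsFacet F ∧ s ⊆ F := by
    obtain rfl | hs := hs
    · exact let ⟨F, hF, _⟩ := h.exists_facet h.nonempty.choose_spec; ⟨F, hF, F.empty_subset⟩
    · exact h.exists_facet hs
  have hcF := (h.isFacet_iff.mp hF).2
  obtain ⟨x, hxF, hxs⟩ : ∃ x ∈ F, x ∉ s := Finset.exists_mem_notMem_of_card_lt_card (by lia)
  exact ⟨x, singleton_mem_lk.mpr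
    ⟨hxs, mem_faces_of_subset hF.1 (Finset.insert_subset hxF hsF) (by simp)⟩⟩

theorem IsLinkNormal.starAdj_of_card_le (h : K.IsLinkNormal d) {σ F G : Finset ℕ}
    (hσ : d ≤ σ.card) (hF : K.IsFacet F) (hG : K.IsFacet G) (hσF : σ ⊆ F) (hσG : σ ⊆ G) :
    Relation.ReflTransGen (K.StarAdj σ) F G := by
  obtain rfl | hFG := eq_or_ne F G
  · rfl
  have hcF := (h.isFacet_iff.mp hF).2
  have hcG := (h.isFacet_iff.mp hG).2
  have hlt : (F ∩ G).card < F.card := Finset.card_lt_card <|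
    Finset.inter_subset_left.ssubset_of_ne fun e ↦
      hFG <| Finset.eq_of_subset_of_card_le (Finset.inter_eq_left.mp e) (by lia)
  have hle : σ.card ≤ (F ∩ G).card := Finset.card_le_card (Finset.subset_inter hσF hσG)
  exact .single ⟨⟨hF, hG, by lia⟩, hσF, hσG⟩

/-- Downward induction on the dimension of `σ`: a path in the link of `σ` is followed through the
stars of `insert z σ`, where `z` runs over the vertices of the path. -/
theorem IsLinkNormal.reflTransGen_starAdj (h : K.IsLinkNormal d) (σ : Finset ℕ) {F G : Finset ℕ}
    (hF : K.IsFacet F) (hG : K.IsFacet G) (hσF : σ ⊆ F) (hσG : σ ⊆ G) :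
    Relation.ReflTransGen (K.StarAdj σ) F G := by
  induction hn : d - σ.card generalizing σ F G with
  | zero => exact h.starAdj_of_card_le (by lia) hF hG hσF hσG
  | succ n ih =>
    have star {z : ℕ} {A B : Finset ℕ} (hz : z ∉ σ) (hA : K.IsFacet A) (hB : K.IsFacet B)
        (hzA : insert z σ ⊆ A) (hzB : insert z σ ⊆ B) : Relation.ReflTransGen (K.StarAdj σ) A B :=
      Relation.ReflTransGen.mono (fun _ _ ↦ StarAdj.mono (Finset.subset_insert z σ)) _ _
        (ih (insert z σ) hA hB hzA hzB (by rw [Finset.card_insert_of_notMem hz]; lia))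
    have exists_vertex {A : Finset ℕ} (hA : K.IsFacet A) (hσA : σ ⊆ A) :
        ∃ z ∉ σ, insert z σ ⊆ A := by
      have hcA := (h.isFacet_iff.mp hA).2
      obtain ⟨z, hzA, hz⟩ := Finset.exists_mem_notMem_of_card_lt_card (s := σ) (t := A) (by lia)
      exact ⟨z, hz, Finset.insert_subset hzA hσA⟩
    obtain ⟨x, hx, hxF⟩ := exists_vertex hF hσF
    obtain ⟨y, hy, hyG⟩ := exists_vertex hG hσG
    have path := h.connected σ (by lia) x y
      (singleton_mem_lk.mpr ⟨hx, mem_faces_of_subset hF.1 hxF (by simp)⟩)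
      (singleton_mem_lk.mpr ⟨hy, mem_faces_of_subset hG.1 hyG (by simp)⟩)
    clear hσG
    induction path generalizing G with
    | refl => exact star hx hF hG hxF hyG
    | @tail a b _ hab ihp =>
      obtain ⟨ha, hb, habK⟩ := vertAdj_lk.mp hab
      obtain ⟨M, hM, habM⟩ := h.exists_facet habK
      exact (ihp hM ha (by grind)).trans (star hb hM hG (by grind) hyG)

end LinkNormal

theorem IsPure.exists_facet {K : SComplex} {d : ℕ} (h : K.IsPure d) {s : Finset ℕ}
    (hs : s ∈ K.faces) : ∃ F, K.IsFacet F ∧ s ⊆ F ∧ F.card = d + 1 := by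
  obtain ⟨F, hsF, hF⟩ := Finset.exists_le_maximal K.faces hs
  have hF' : K.IsFacet F := ⟨hF.prop, fun G hG hFG ↦ hF.eq_of_le hG hFG⟩
  exact ⟨F, hF', hsF, h.2 F hF'⟩

section Iff

variable {K : SComplex} {d : ℕ}

theorem mem_filter_facets_iff {s F : Finset ℕ} (hs : s.card = d) :
    F ∈ K.faces.filter (fun F ↦ F.card = d + 1 ∧ s ⊆ F) ↔
      ∃ z, {z} ∈ (K.lk s).faces ∧ insert z s = F := by
  simp only [Finset.mem_filter, singleton_mem_lk]
  constructor
  · rintro ⟨hF, hc, hsF⟩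
    obtain ⟨z, hz, rfl⟩ := exists_insert_of_subset hsF (by lia)
    exact ⟨z, ⟨hz, hF⟩, rfl⟩
  · rintro ⟨z, ⟨hz, hF⟩, rfl⟩
    exact ⟨hF, by rw [Finset.card_insert_of_notMem hz, hs], Finset.subset_insert z s⟩

theorem card_filter_facets_eq_two_iff {s : Finset ℕ} (hs : s.card = d) :
    (K.faces.filter fun F ↦ F.card = d + 1 ∧ s ⊆ F).card = 2 ↔
      ∃ x y, x ≠ y ∧ ∀ z, {z} ∈ (K.lk s).faces ↔ z = x ∨ z = y := by
  have insert_inj {x y : ℕ} (hx : x ∉ s) (h : insert x s = insert y s) : x = y :=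
    (Finset.insert_inj hx).mp h
  rw [Finset.card_eq_two]
  constructor
  · rintro ⟨F, G, hFG, e⟩
    replace e (H) := (mem_filter_facets_iff (F := H) hs).symm.trans (Finset.ext_iff.mp e H)
    simp only [Finset.mem_insert, Finset.mem_singleton] at e
    obtain ⟨x, hx, rfl⟩ := (e F).mpr (.inl rfl)
    obtain ⟨y, hy, rfl⟩ := (e G).mpr (.inr rfl)
    refine ⟨x, y, fun h ↦ hFG (h ▸ rfl),
      fun z ↦ ⟨fun hz ↦ ?_, by rintro (rfl | rfl) <;> assumption⟩⟩
    have hz' := (singleton_mem_lk.mp hz).1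
    exact ((e _).mp ⟨z, hz, rfl⟩).imp (insert_inj hz') (insert_inj hz')
  · rintro ⟨x, y, hxy, hz⟩
    refine ⟨insert x s, insert y s,
      fun h ↦ hxy (insert_inj (singleton_mem_lk.mp ((hz x).mpr (.inl rfl))).1 h), ?_⟩
    ext F
    simp only [mem_filter_facets_iff hs, hz, Finset.mem_insert, Finset.mem_singleton,
      or_and_right, exists_or, exists_eq_left, eq_comm (a := F)]

/-- The link of `∅` is the whole complex, whose connectedness follows from strong connectedness. -/
theorem StronglyConnected.reflTransGen_lk_empty (hs : K.StronglyConnected) (hp : K.IsPure d)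
    (hd : 0 < d) {x y : ℕ} (hx : {x} ∈ K.faces) (hy : {y} ∈ K.faces) :
    Relation.ReflTransGen (K.lk ∅).VertAdj x y := by
  have adj {F : Finset ℕ} (hF : K.IsFacet F) {a b : ℕ} (ha : a ∈ F) (hb : b ∈ F) :
      (K.lk ∅).VertAdj a b := vertAdj_lk.mpr (by simpa [VertAdj] using hF.vertAdj ha hb)
  obtain ⟨F, hF, hxF, -⟩ := hp.exists_facet hx
  obtain ⟨G, hG, hyG, -⟩ := hp.exists_facet hy
  rw [Finset.singleton_subset_iff] at hxF hyG
  have path := hs F G hF hG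
  clear hy
  induction path generalizing y with
  | refl => exact .single (adj hF hxF hyG)
  | @tail A B _ hAB ih =>
    obtain ⟨z, hz⟩ : (A ∩ B).Nonempty := by
      rw [← Finset.card_pos]
      have := hp.2 A hAB.1
      have := hAB.2.2
      lia
    rw [Finset.mem_inter] at hz
    exact (ih hAB.1 hz.1).tail (adj hAB.2.1 hz.2 hyG)

theorem IsNormalPseudomanifold.isLinkNormal (h : K.IsNormalPseudomanifold d) :
    K.IsLinkNormal d := by
  obtain ⟨hp, hs, h2, hl⟩ := h
  refine ⟨hp.1, fun s hs ↦ ?_, fun s hs hc ↦ (card_filter_facets_eq_two_iff hc).mp (h2 s hs hc),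
    fun s hc x y hx hy ↦ ?_⟩
  · obtain ⟨F, hF, h⟩ := hp.exists_facet hs
    exact ⟨F, hF.1, h⟩
  · obtain rfl | hne := s.eq_empty_or_nonempty
    · rw [singleton_mem_lk] at hx hy
      exact hs.reflTransGen_lk_empty hp (by lia) (by simpa using hx) (by simpa using hy)
    · have hsK := mem_faces_of_subset (singleton_mem_lk.mp hx).2 (Finset.subset_insert x s) hne
      exact (hl s hsK (by lia)).2 x y hx hy

theorem IsLinkNormal.isNormalPseudomanifold (h : K.IsLinkNormal d) :
    K.IsNormalPseudomanifold d := by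
  refine ⟨⟨h.nonempty, fun s hs ↦ (h.isFacet_iff.mp hs).2⟩, fun F G hF hG ↦ ?_,
    fun s hs hc ↦ (card_filter_facets_eq_two_iff hc).mpr (h.exists_opposite s hs hc),
    fun s hs hc ↦ ?_⟩
  · exact Relation.ReflTransGen.mono (fun _ _ hA ↦ hA.1) _ _
      (h.reflTransGen_starAdj ∅ hF hG F.empty_subset G.empty_subset)
  · have hpos := (nonempty_of_mem_faces hs).card_pos
    obtain ⟨x, hx⟩ := h.exists_mem_lk (.inr hs) (by lia)
    exact ⟨⟨_, hx⟩, fun u v ↦ h.connected s (by lia) u v⟩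

end Iff

/-! ### Paths avoiding a vertex -/

theorem exists_reachable_odd_degree {V : Type*} [Fintype V] (G : SimpleGraph V)
    [DecidableRel G.Adj] {v : V} (hv : Odd (G.degree v)) :
    ∃ w ≠ v, Odd (G.degree w) ∧ G.Reachable v w := by
  classical
  set C := G.connectedComponentMk v
  set H := C.toSimpleGraph.spanningCoe
  have degree_eq {u : V} (hu : u ∈ C.supp) : H.degree u = G.degree u := by
    simp only [← SimpleGraph.card_neighborFinset_eq_degree]
    congr 1
    ext w
    rw [SimpleGraph.mem_neighborFinset, SimpleGraph.mem_neighborFinset,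
      C.adj_spanningCoe_toSimpleGraph, and_iff_right hu]
  have hvC : v ∈ C.supp := rfl
  obtain ⟨w, hwv, hw⟩ := H.exists_ne_odd_degree_of_exists_odd_degree v (by rwa [degree_eq hvC])
  obtain ⟨u, hu⟩ := (H.degree_pos_iff_exists_adj w).mp hw.pos
  have hwC := (C.adj_spanningCoe_toSimpleGraph.mp hu).1
  exact ⟨w, hwv, degree_eq hwC ▸ hw, SimpleGraph.ConnectedComponent.exact hwC.symm⟩

/-- After deleting `v` from a 2-regular graph, exactly the neighbours of `v` have odd degree. -/
theorem reachable_induce_compl_of_isRegularOfDegree_two {V : Type*} [Fintype V] (G : SimpleGraph V)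
    [DecidableRel G.Adj] (hG : G.IsRegularOfDegree 2) {v p q : V} (hp : G.Adj v p)
    (hq : G.Adj v q) :
    (G.induce {v}ᶜ).Reachable ⟨p, hp.ne'⟩ ⟨q, hq.ne'⟩ := by
  classical
  have degree_induce (x : ({v}ᶜ : Set V)) :
      (G.induce {v}ᶜ).degree x = ((G.neighborFinset x).erase v).card := by
    rw [← SimpleGraph.card_neighborFinset_eq_degree, ← Finset.card_map (.subtype _)]
    congr 1
    ext z
    simp [and_comm]
  have odd_degree (x : ({v}ᶜ : Set V)) : Odd ((G.induce {v}ᶜ).degree x) ↔ G.Adj v x := by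
    simp only [degree_induce, Finset.card_erase_eq_ite, SimpleGraph.mem_neighborFinset,
      G.adj_comm x v, SimpleGraph.card_neighborFinset_eq_degree, hG.degree_eq]
    split_ifs with h <;> simp [h, Nat.odd_iff]
  obtain ⟨w, hwp, hw, hpw⟩ := exists_reachable_odd_degree (G.induce {v}ᶜ) (v := ⟨p, hp.ne'⟩)
    ((odd_degree _).mpr hp)
  obtain rfl | hqp := eq_or_ne q p
  · rfl
  have neighbors : ({p, q} : Finset V) = G.neighborFinset v :=
    Finset.eq_of_subset_of_card_le (by simp [Finset.insert_subset_iff, hp, hq])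
      (by rw [SimpleGraph.card_neighborFinset_eq_degree, hG.degree_eq, Finset.card_pair hqp.symm])
  have hwpq : (w : V) ∈ ({p, q} : Finset V) := by simpa [neighbors] using (odd_degree w).mp hw
  obtain rfl : w = ⟨q, hq.ne'⟩ := Subtype.ext <| Finset.mem_singleton.mp <|
    (Finset.mem_insert.mp hwpq).resolve_left fun h ↦ hwp (Subtype.ext h)
  exact hpw

theorem mem_vertexSet {L : SComplex} {x : ℕ} : x ∈ L.vertexSet ↔ {x} ∈ L.faces := by
  simp only [vertexSet, Finset.mem_sup, id_eq]
  exact ⟨fun ⟨s, hs, hx⟩ ↦ mem_faces_of_subset hs (by simpa) (by simp), fun hx ↦ ⟨{x}, hx, by simp⟩⟩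

theorem reflTransGen_vertAdj_ne {L : SComplex} {v p q : ℕ}
    (hL : ∀ x, {x} ∈ L.faces → ∃ a b, a ≠ b ∧ ∀ z, x ≠ z ∧ L.VertAdj x z ↔ z = a ∨ z = b)
    (hp : v ≠ p ∧ L.VertAdj v p) (hq : v ≠ q ∧ L.VertAdj v q) :
    Relation.ReflTransGen (fun x y ↦ L.VertAdj x y ∧ x ≠ v ∧ y ≠ v) p q := by
  classical
  let G : SimpleGraph L.vertexSet := SimpleGraph.fromRel fun x y ↦ L.VertAdj x y
  have adj {x y} : G.Adj x y ↔ (x : ℕ) ≠ y ∧ L.VertAdj x y := by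
    simp only [G, SimpleGraph.fromRel_adj, ne_eq, Subtype.ext_iff]
    exact and_congr_right fun _ ↦ or_iff_left_of_imp VertAdj.symm
  have regular : G.IsRegularOfDegree 2 := fun x ↦ by
    obtain ⟨a, b, hab, hz⟩ := hL x (mem_vertexSet.mp x.2)
    have mem (z) (h : z = a ∨ z = b) : z ∈ L.vertexSet := mem_vertexSet.mpr ((hz z).mpr h).2.right
    rw [← SimpleGraph.card_neighborFinset_eq_degree, Finset.card_eq_two]
    refine ⟨⟨a, mem a (.inl rfl)⟩, ⟨b, mem b (.inr rfl)⟩, fun h ↦ hab (congrArg Subtype.val h), ?_⟩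
    ext z
    simp only [SimpleGraph.mem_neighborFinset, adj, hz, Finset.mem_insert, Finset.mem_singleton,
      Subtype.ext_iff]
  have mem {x} (hx : L.VertAdj v x) : x ∈ L.vertexSet := mem_vertexSet.mpr hx.right
  have path := reachable_induce_compl_of_isRegularOfDegree_two G regular
    (v := ⟨v, mem_vertexSet.mpr hp.2.left⟩) (p := ⟨p, mem hp.2⟩) (q := ⟨q, mem hq.2⟩)
    (adj.mpr hp) (adj.mpr hq)
  rw [SimpleGraph.reachable_iff_reflTransGen] at path
  refine Relation.ReflTransGen.lift (r := (G.induce _).Adj) (fun x ↦ (x.1 : ℕ)) (fun x y h ↦ ?_)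
    _ _ path
  exact ⟨(adj.mp h).2, fun e ↦ x.2 (Subtype.ext e), fun e ↦ y.2 (Subtype.ext e)⟩

theorem IsLinkNormal.exists_two_neighbors {K : SComplex} {d : ℕ} (h : K.IsLinkNormal d)
    {s : Finset ℕ} (hs : s.card + 1 = d) {x : ℕ} (hx : {x} ∈ (K.lk s).faces) :
    ∃ a b, a ≠ b ∧ ∀ z, x ≠ z ∧ (K.lk s).VertAdj x z ↔ z = a ∨ z = b := by
  rw [singleton_mem_lk] at hx
  obtain ⟨a, b, hab, hz⟩ := h.exists_opposite _ hx.2 (by rw [Finset.card_insert_of_notMem hx.1, hs])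
  refine ⟨a, b, hab, fun z ↦ ?_⟩
  rw [← hz, singleton_mem_lk, vertAdj_lk, Finset.insert_comm z, Finset.mem_insert]
  grind

theorem reflTransGen_of_bypass {α : Type*} {R R' : α → α → Prop} {r x y : α}
    (keep : ∀ a b, a ≠ r → b ≠ r → R a b → R' a b)
    (bypass : ∀ a b, a ≠ r → b ≠ r → R a r → R r b → Relation.ReflTransGen R' a b)
    (h : Relation.ReflTransGen R x y) (hx : x ≠ r) (hy : y ≠ r) :
    Relation.ReflTransGen R' x y := by
  suffices key : ∀ z, Relation.ReflTransGen R x z →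
      (z ≠ r → Relation.ReflTransGen R' x z) ∧
      (z = r → ∀ b, R r b → b ≠ r → Relation.ReflTransGen R' x b) from (key y h).1 hy
  intro z hz
  induction hz with
  | refl => exact ⟨fun _ ↦ .refl, fun h ↦ absurd h hx⟩
  | @tail a b _ hab ih =>
    obtain rfl | ha := eq_or_ne a r
    · exact ⟨ih.2 rfl b hab, fun _ ↦ ih.2 rfl⟩
    · refine ⟨fun hb ↦ (ih.1 ha).tail (keep a b ha hb hab), ?_⟩
      rintro rfl c hc hcb
      exact (ih.1 ha).trans (bypass a c ha hcb hab hc)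

/-! ### Edge contractions -/

/-- The vertex map that identifies `t` and `v` to the new vertex `w`. -/
def mergeVertex (t v w x : ℕ) : ℕ := if x = t ∨ x = v then w else x

/-- The complex obtained from `K` by identifying the vertices `t` and `v` to `w`. -/
def mergeVertices (K : SComplex) (t v w : ℕ) : SComplex where
  faces := K.faces.image (Finset.image (mergeVertex t v w))
  not_empty_mem h := by
    obtain ⟨s, hs, e⟩ := Finset.mem_image.mp h
    exact K.not_empty_mem (Finset.image_eq_empty.mp e ▸ hs)
  down_closed s hs u hu hne := by
    obtain ⟨s', hs', rfl⟩ := Finset.mem_image.mp hs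
    obtain ⟨u', hu', rfl⟩ := Finset.subset_image_iff.mp hu
    exact Finset.mem_image_of_mem _ (K.down_closed s' hs' u' hu' (by rintro rfl; exact hne rfl))

/-- The edge `tv` of the normal `d`-pseudomanifold `K` satisfies the link condition
`lk(t) ∩ lk(v) = lk(tv)`, and `w` is not a vertex of `K`. -/
structure IsContractible (K : SComplex) (d t v w : ℕ) : Prop where
  isLinkNormal : K.IsLinkNormal d
  ne : t ≠ v
  fresh : ∀ s ∈ K.faces, w ∉ s
  edge : {t, v} ∈ K.faces
  linkCondition : ∀ γ, t ∉ γ → v ∉ γ → insert t γ ∈ K.faces → insert v γ ∈ K.faces →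
    insert t (insert v γ) ∈ K.faces

section Contraction

variable {K : SComplex} {d t v w : ℕ}

theorem mergeVertex_comm (t v w : ℕ) : mergeVertex t v w = mergeVertex v t w := by
  funext x
  simp [mergeVertex, or_comm]

theorem mergeVertices_comm (K : SComplex) (t v w : ℕ) :
    K.mergeVertices t v w = K.mergeVertices v t w := by
  simp [mergeVertices, mergeVertex_comm t v w]

theorem mem_image_mergeVertex {s : Finset ℕ} {x : ℕ} (hx : x ≠ w) :
    x ∈ s.image (mergeVertex t v w) ↔ x ∈ s ∧ x ≠ t ∧ x ≠ v := by
  simp only [Finset.mem_image, mergeVertex]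
  grind

theorem new_mem_image_mergeVertex {s : Finset ℕ} (hw : w ∉ s) :
    w ∈ s.image (mergeVertex t v w) ↔ t ∈ s ∨ v ∈ s := by
  simp only [Finset.mem_image, mergeVertex]
  grind

theorem image_mergeVertex {s : Finset ℕ} (ht : t ∉ s) (hv : v ∉ s) :
    s.image (mergeVertex t v w) = s := by
  ext x
  simp only [Finset.mem_image, mergeVertex]
  grind

theorem image_mergeVertex_insert {s : Finset ℕ} (ht : t ∉ s) (hv : v ∉ s) (x : ℕ) :
    (insert x s).image (mergeVertex t v w) = insert (mergeVertex t v w x) s := by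
  rw [Finset.image_insert, image_mergeVertex ht hv]

theorem injOn_mergeVertex {F : Finset ℕ} (hw : w ∉ F) (hv : v ∉ F) :
    Set.InjOn (mergeVertex t v w) F := by
  intro a ha b hb hab
  simp only [mergeVertex] at hab
  grind

namespace IsContractible

theorem symm (h : K.IsContractible d t v w) : K.IsContractible d v t w where
  isLinkNormal := h.isLinkNormal
  ne := h.ne.symm
  fresh := h.fresh
  edge := Finset.pair_comm t v ▸ h.edge
  linkCondition γ hv ht hvγ htγ := Finset.insert_comm t v γ ▸ h.linkCondition γ ht hv htγ hvγ

theorem ne_left (h : K.IsContractible d t v w) : w ≠ t := by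
  rintro rfl
  exact h.fresh _ h.edge (by simp)

theorem ne_right (h : K.IsContractible d t v w) : w ≠ v := h.symm.ne_left

theorem notMem_of_mem_mergeVertices (h : K.IsContractible d t v w) {s : Finset ℕ}
    (hs : s ∈ (K.mergeVertices t v w).faces) : t ∉ s ∧ v ∉ s := by
  obtain ⟨s, -, rfl⟩ := Finset.mem_image.mp hs
  rw [mem_image_mergeVertex h.ne_left.symm, mem_image_mergeVertex h.ne_right.symm]
  simp

theorem mem_mergeVertices (h : K.IsContractible d t v w) {s : Finset ℕ} (hw : w ∉ s) :
    s ∈ (K.mergeVertices t v w).faces ↔ t ∉ s ∧ v ∉ s ∧ s ∈ K.faces := by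
  refine ⟨fun hs ↦ ?_, fun ⟨ht, hv, hs⟩ ↦ Finset.mem_image.mpr ⟨s, hs, image_mergeVertex ht hv⟩⟩
  obtain ⟨ht, hv⟩ := h.notMem_of_mem_mergeVertices hs
  obtain ⟨u, hu, rfl⟩ := Finset.mem_image.mp hs
  have htu : t ∉ u := fun htu ↦ hw (Finset.mem_image.mpr ⟨t, htu, by simp [mergeVertex]⟩)
  have hvu : v ∉ u := fun hvu ↦ hw (Finset.mem_image.mpr ⟨v, hvu, by simp [mergeVertex]⟩)
  exact ⟨ht, hv, (image_mergeVertex htu hvu).symm ▸ hu⟩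

theorem insert_mem_mergeVertices (h : K.IsContractible d t v w) {γ : Finset ℕ} (hw : w ∉ γ) :
    insert w γ ∈ (K.mergeVertices t v w).faces ↔
      t ∉ γ ∧ v ∉ γ ∧ (insert t γ ∈ K.faces ∨ insert v γ ∈ K.faces) := by
  constructor
  · intro hs
    obtain ⟨ht, hv⟩ := h.notMem_of_mem_mergeVertices hs
    refine ⟨by grind, by grind, ?_⟩
    obtain ⟨s, hs, e⟩ := Finset.mem_image.mp hs
    have hws := h.fresh s hs
    have hγs : γ ⊆ s := fun x hx ↦
      ((mem_image_mergeVertex (by grind)).mp (e ▸ Finset.mem_insert_of_mem hx)).1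
    obtain hts | hvs := (new_mem_image_mergeVertex hws).mp (e ▸ Finset.mem_insert_self w γ)
    · exact .inl (mem_faces_of_subset hs (Finset.insert_subset hts hγs) (by simp))
    · exact .inr (mem_faces_of_subset hs (Finset.insert_subset hvs hγs) (by simp))
  · rintro ⟨ht, hv, hs | hs⟩ <;>
    exact Finset.mem_image.mpr
      ⟨_, hs, by rw [image_mergeVertex_insert ht hv]; simp [mergeVertex]⟩

theorem singleton_mem_lk_insert (h : K.IsContractible d t v w) {γ : Finset ℕ} (ht : t ∉ γ)
    (hv : v ∉ γ) (hw : w ∉ γ) {z : ℕ} :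
    {z} ∈ ((K.mergeVertices t v w).lk (insert w γ)).faces ↔
      z ≠ t ∧ z ≠ v ∧ ({z} ∈ (K.lk (insert t γ)).faces ∨ {z} ∈ (K.lk (insert v γ)).faces) := by
  simp only [singleton_mem_lk]
  have := h.fresh
  by_cases hwz : w = z
  · grind
  · rw [Finset.insert_comm, h.insert_mem_mergeVertices (by grind), Finset.insert_comm z t,
      Finset.insert_comm z v]
    grind

theorem singleton_mem_lk_iff (h : K.IsContractible d t v w) {γ : Finset ℕ} (ht : t ∉ γ)
    (hv : v ∉ γ) (hw : w ∉ γ) {z : ℕ} :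
    {z} ∈ ((K.mergeVertices t v w).lk γ).faces ↔
      ∃ x, {x} ∈ (K.lk γ).faces ∧ mergeVertex t v w x = z := by
  simp only [singleton_mem_lk, mergeVertex]
  by_cases hwz : w = z
  · subst hwz
    rw [h.insert_mem_mergeVertices hw]
    have := h.fresh
    grind
  · rw [h.mem_mergeVertices (by grind)]
    grind

/-- A face of codimension zero cannot be joined to both ends of `tv`, for dimension reasons. -/
theorem notMem_lk_of_mem_lk (h : K.IsContractible d t v w) {γ : Finset ℕ} (hc : γ.card = d)
    (ht : {t} ∈ (K.lk γ).faces) : {v} ∉ (K.lk γ).faces := by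
  intro hv
  rw [singleton_mem_lk] at ht hv
  have hle := h.isLinkNormal.card_le (h.linkCondition γ ht.1 hv.1 ht.2 hv.2)
  have hne := h.ne
  rw [Finset.card_insert_of_notMem (by grind), Finset.card_insert_of_notMem hv.1] at hle
  lia

theorem exists_opposite (h : K.IsContractible d t v w) {s : Finset ℕ} (hw : w ∉ s)
    (hs : s ∈ (K.mergeVertices t v w).faces) (hc : s.card = d) :
    ∃ x y, x ≠ y ∧ ∀ z, {z} ∈ ((K.mergeVertices t v w).lk s).faces ↔ z = x ∨ z = y := by
  obtain ⟨ht, hv, hs⟩ := (h.mem_mergeVertices hw).mp hs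
  obtain ⟨x, y, hxy, hz⟩ := h.isLinkNormal.exists_opposite s hs hc
  refine ⟨mergeVertex t v w x, mergeVertex t v w y, fun e ↦ ?_, fun z ↦ ?_⟩
  · have hnb := h.notMem_lk_of_mem_lk hc
    have hwx : ¬ (w = x ∨ w = y) := fun hw' ↦
      h.fresh _ (singleton_mem_lk.mp ((hz w).mpr hw')).2 (by simp)
    simp only [hz] at hnb
    simp only [mergeVertex] at e
    grind
  · rw [h.singleton_mem_lk_iff ht hv hw]
    grind

theorem exists_other_neighbor (h : K.IsContractible d t v w) {γ : Finset ℕ}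
    (hc : γ.card + 1 = d) (ht : t ∉ γ) (hv : v ∉ γ) (htγ : insert t γ ∈ K.faces)
    (hvγ : insert v γ ∈ K.faces) :
    ∃ x, x ≠ v ∧ ∀ z, {z} ∈ (K.lk (insert t γ)).faces ↔ z = v ∨ z = x := by
  obtain ⟨x, y, hxy, hz⟩ := h.isLinkNormal.exists_opposite _ htγ
    (by rw [Finset.card_insert_of_notMem ht, hc])
  have hvlk : {v} ∈ (K.lk (insert t γ)).faces := singleton_mem_lk.mpr
    ⟨by grind [h.ne], Finset.insert_comm t v γ ▸ h.linkCondition γ ht hv htγ hvγ⟩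
  obtain rfl | rfl := (hz v).mp hvlk
  · exact ⟨y, hxy.symm, hz⟩
  · exact ⟨x, hxy, fun z ↦ (hz z).trans or_comm⟩

theorem exists_opposite_insert (h : K.IsContractible d t v w) {γ : Finset ℕ} (hw : w ∉ γ)
    (hc : γ.card + 1 = d) (ht : t ∉ γ) (hv : v ∉ γ) (htγ : insert t γ ∈ K.faces) :
    ∃ x y, x ≠ y ∧
      ∀ z, {z} ∈ ((K.mergeVertices t v w).lk (insert w γ)).faces ↔ z = x ∨ z = y := by
  simp only [h.singleton_mem_lk_insert ht hv hw]
  by_cases hvγ : insert v γ ∈ K.faces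
  · obtain ⟨x, hxv, hx⟩ := h.exists_other_neighbor hc ht hv htγ hvγ
    obtain ⟨y, hyt, hy⟩ := h.symm.exists_other_neighbor hc hv ht hvγ htγ
    have htx := singleton_mem_lk.mp ((hx x).mpr (.inr rfl))
    have hvy := singleton_mem_lk.mp ((hy y).mpr (.inr rfl))
    refine ⟨x, y, ?_, by grind⟩
    rintro rfl
    refine h.notMem_lk_of_mem_lk (γ := insert x γ)
      (by rw [Finset.card_insert_of_notMem (by grind), hc])
      (singleton_mem_lk.mpr ⟨by grind, ?_⟩) (singleton_mem_lk.mpr ⟨by grind, ?_⟩)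
    · exact Finset.insert_comm t x γ ▸ htx.2
    · exact Finset.insert_comm v x γ ▸ hvy.2
  · obtain ⟨x, y, hxy, hz⟩ := h.isLinkNormal.exists_opposite _ htγ
      (by rw [Finset.card_insert_of_notMem ht, hc])
    have notMem_lk (z) : {z} ∉ (K.lk (insert v γ)).faces := fun hz ↦
      hvγ (mem_faces_of_subset (singleton_mem_lk.mp hz).2 (by simp) (by simp))
    have htv {z} (hz : {z} ∈ (K.lk (insert t γ)).faces) : z ≠ t ∧ z ≠ v := by
      refine ⟨fun e ↦ ?_, fun e ↦ hvγ ?_⟩ <;> subst e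
      · exact (singleton_mem_lk.mp hz).1 (by simp)
      · exact mem_faces_of_subset (singleton_mem_lk.mp hz).2 (by grind) (by simp)
    exact ⟨x, y, hxy, fun z ↦ by grind⟩

/-- Two vertices of the link of `tγ` are joined by a path there, and a visit of that path to `v`
is bypassed inside the link of `tvγ`, which is contained in that of `wγ`. -/
theorem reflTransGen_lk_insert (h : K.IsContractible d t v w) {γ : Finset ℕ} (hw : w ∉ γ)
    (hc : γ.card + 1 < d) (ht : t ∉ γ) (hv : v ∉ γ) {x y : ℕ} (hxv : x ≠ v) (hyv : y ≠ v)
    (hx : {x} ∈ (K.lk (insert t γ)).faces) (hy : {y} ∈ (K.lk (insert t γ)).faces) :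
    Relation.ReflTransGen ((K.mergeVertices t v w).lk (insert w γ)).VertAdj x y := by
  have hctγ : (insert t γ).card = γ.card + 1 := Finset.card_insert_of_notMem ht
  have keep {a b : ℕ} (ha : a ≠ v) (hb : b ≠ v) (hab : (K.lk (insert t γ)).VertAdj a b) :
      ((K.mergeVertices t v w).lk (insert w γ)).VertAdj a b := by
    rw [vertAdj_lk] at hab ⊢
    have := h.fresh _ hab.2.2
    rw [Finset.insert_comm b, Finset.insert_comm a, h.insert_mem_mergeVertices (by grind),
      Finset.insert_comm t, Finset.insert_comm t]
    grind
  refine reflTransGen_of_bypass (fun a b ↦ keep) (fun a b ha hb hav hvb ↦ ?_)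
    (h.isLinkNormal.connected _ (by lia) x y hx hy) hxv hyv
  obtain hlt | heq : γ.card + 2 < d ∨ (insert t γ).card + 1 = d := by lia
  · have lk_subset {p q : ℕ} (hpq : (K.lk (insert v (insert t γ))).VertAdj p q) :
        p ≠ v ∧ q ≠ v ∧ (K.lk (insert t γ)).VertAdj p q := by
      rw [vertAdj_lk] at hpq ⊢
      have := mem_faces_of_subset hpq.2.2 (u := insert p (insert q (insert t γ))) (by grind)
        (by simp)
      grind
    rw [vertAdj_lk] at hav hvb
    rw [Finset.insert_comm v b] at hvb
    refine Relation.ReflTransGen.mono (fun p q hpq ↦ ?_) _ _ <|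
      h.isLinkNormal.connected (insert v (insert t γ)) ?_ a b
        (singleton_mem_lk.mpr (by grind)) (singleton_mem_lk.mpr (by grind))
    · exact let ⟨hp, hq, hpq⟩ := lk_subset hpq; keep hp hq hpq
    · rw [Finset.card_insert_of_notMem (by grind), hctγ]
      exact hlt
  · exact Relation.ReflTransGen.mono (fun a b hab ↦ keep hab.2.1 hab.2.2 hab.1) _ _ <|
      reflTransGen_vertAdj_ne (fun z hz ↦ h.isLinkNormal.exists_two_neighbors heq hz)
        ⟨ha.symm, hav.symm⟩ ⟨hb.symm, hvb⟩

theorem connected_insert (h : K.IsContractible d t v w) {γ : Finset ℕ} (hw : w ∉ γ)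
    (hc : γ.card + 1 < d) {x y : ℕ}
    (hx : {x} ∈ ((K.mergeVertices t v w).lk (insert w γ)).faces)
    (hy : {y} ∈ ((K.mergeVertices t v w).lk (insert w γ)).faces) :
    Relation.ReflTransGen ((K.mergeVertices t v w).lk (insert w γ)).VertAdj x y := by
  obtain ⟨ht, hv⟩ := h.notMem_of_mem_mergeVertices
    (mem_faces_of_subset (singleton_mem_lk.mp hx).2 (Finset.subset_insert _ _) (by simp))
  have htγ : t ∉ γ := by grind
  have hvγ : v ∉ γ := by grind
  have pathT {a b : ℕ} := h.reflTransGen_lk_insert hw hc htγ hvγ (x := a) (y := b)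
  have pathV {a b : ℕ} (hat : a ≠ t) (hbt : b ≠ t) (ha : {a} ∈ (K.lk (insert v γ)).faces)
      (hb : {b} ∈ (K.lk (insert v γ)).faces) :
      Relation.ReflTransGen ((K.mergeVertices t v w).lk (insert w γ)).VertAdj a b :=
    K.mergeVertices_comm t v w ▸ h.symm.reflTransGen_lk_insert hw hc hvγ htγ hat hbt ha hb
  rw [h.singleton_mem_lk_insert htγ hvγ hw] at hx hy
  have common (htK : insert t γ ∈ K.faces) (hvK : insert v γ ∈ K.faces) :
      ∃ z, z ≠ t ∧ z ≠ v ∧ {z} ∈ (K.lk (insert t γ)).faces ∧ {z} ∈ (K.lk (insert v γ)).faces := by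
    obtain ⟨z, hz⟩ := h.isLinkNormal.exists_mem_lk (.inr (h.linkCondition γ htγ hvγ htK hvK))
      (by have := Finset.card_insert_le t (insert v γ); have := Finset.card_insert_le v γ; lia)
    rw [singleton_mem_lk] at hz
    simp only [singleton_mem_lk]
    have := mem_faces_of_subset hz.2 (u := insert z (insert t γ)) (by grind) (by simp)
    have := mem_faces_of_subset hz.2 (u := insert z (insert v γ)) (by grind) (by simp)
    grind
  have mem {u a : ℕ} (ha : {a} ∈ (K.lk (insert u γ)).faces) : insert u γ ∈ K.faces :=
    mem_faces_of_subset (singleton_mem_lk.mp ha).2 (Finset.subset_insert _ _) (by simp)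
  obtain ⟨hxt, hxv, hx | hx⟩ := hx <;> obtain ⟨hyt, hyv, hy | hy⟩ := hy
  · exact pathT hxv hyv hx hy
  · obtain ⟨z, hzt, hzv, hz, hz'⟩ := common (mem hx) (mem hy)
    exact (pathT hxv hzv hx hz).trans (pathV hzt hyt hz' hy)
  · obtain ⟨z, hzt, hzv, hz, hz'⟩ := common (mem hy) (mem hx)
    exact (pathV hxt hzt hx hz').trans (pathT hzv hyv hz hy)
  · exact pathV hxt hyt hx hy

theorem connected (h : K.IsContractible d t v w) {s : Finset ℕ} (hw : w ∉ s)
    (hc : s.card < d) {x y : ℕ} (hx : {x} ∈ ((K.mergeVertices t v w).lk s).faces)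
    (hy : {y} ∈ ((K.mergeVertices t v w).lk s).faces) :
    Relation.ReflTransGen ((K.mergeVertices t v w).lk s).VertAdj x y := by
  obtain ⟨hts, hvs⟩ := h.notMem_of_mem_mergeVertices (singleton_mem_lk.mp hx).2
  have ht : t ∉ s := by grind
  have hv : v ∉ s := by grind
  rw [h.singleton_mem_lk_iff ht hv hw] at hx hy
  obtain ⟨x, hx, rfl⟩ := hx
  obtain ⟨y, hy, rfl⟩ := hy
  refine Relation.ReflTransGen.lift _ (fun a b hab ↦ ?_) _ _
    (h.isLinkNormal.connected s hc x y hx hy)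
  obtain ⟨ha, hb, hab⟩ := vertAdj_lk.mp hab
  have := h.fresh _ hab
  refine vertAdj_lk.mpr ⟨?_, ?_, Finset.mem_image.mpr ⟨_, hab, ?_⟩⟩
  · simp only [mergeVertex]; grind
  · simp only [mergeVertex]; grind
  · rw [Finset.image_insert, image_mergeVertex_insert ht hv]

end IsContractible

theorem IsLinkNormal.exists_facet_notMem (h : K.IsLinkNormal d) {s : Finset ℕ} (hs : s ∈ K.faces)
    (hv : v ∉ s) : ∃ F ∈ K.faces, s ⊆ F ∧ F.card = d + 1 ∧ v ∉ F := by
  obtain ⟨F, hF, hsF, hc⟩ := h.exists_superset s hs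
  by_cases hvF : v ∈ F
  · have hsv : s ⊆ F.erase v := Finset.subset_erase.mpr ⟨hsF, hv⟩
    have hcv : (F.erase v).card = d := by rw [Finset.card_erase_of_mem hvF, hc]; rfl
    obtain ⟨x, y, hxy, hz⟩ := h.exists_opposite _
      (mem_faces_of_subset hF (F.erase_subset v) ((nonempty_of_mem_faces hs).mono hsv)) hcv
    obtain ⟨z, hzv, hzlk⟩ : ∃ z ≠ v, {z} ∈ (K.lk (F.erase v)).faces := by
      obtain hxv | rfl := ne_or_eq x v
      · exact ⟨x, hxv, (hz x).mpr (.inl rfl)⟩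
      · exact ⟨y, hxy.symm, (hz y).mpr (.inr rfl)⟩
    obtain ⟨hzF, hzK⟩ := singleton_mem_lk.mp hzlk
    exact ⟨_, hzK, hsv.trans (Finset.subset_insert _ _),
      by rw [Finset.card_insert_of_notMem hzF, hcv], by simp [hzv.symm]⟩
  · exact ⟨F, hF, hsF, hc, hvF⟩

namespace IsContractible

theorem exists_superset (h : K.IsContractible d t v w) {s : Finset ℕ}
    (hs : s ∈ (K.mergeVertices t v w).faces) :
    ∃ F ∈ (K.mergeVertices t v w).faces, s ⊆ F ∧ F.card = d + 1 := by
  have key {t v : ℕ} {s : Finset ℕ} (h : K.IsContractible d t v w) (hs : s ∈ K.faces)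
      (hv : v ∉ s) : ∃ F ∈ (K.mergeVertices t v w).faces,
        s.image (mergeVertex t v w) ⊆ F ∧ F.card = d + 1 := by
    obtain ⟨F, hF, hsF, hc, hvF⟩ := h.isLinkNormal.exists_facet_notMem hs hv
    exact ⟨_, Finset.mem_image_of_mem _ hF, Finset.image_subset_image hsF,
      by rw [Finset.card_image_of_injOn (injOn_mergeVertex (h.fresh F hF) hvF), hc]⟩
  obtain ⟨u, hu, rfl⟩ := Finset.mem_image.mp hs
  by_cases hv : v ∈ u
  · rw [mergeVertices_comm, mergeVertex_comm]
    by_cases ht : t ∈ u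
    · have image_erase : (u.erase t).image (mergeVertex v t w) = u.image (mergeVertex v t w) := by
        rw [← Finset.insert_erase ht, Finset.image_insert, Finset.erase_insert_eq_erase,
          Finset.erase_idem, Finset.insert_eq_of_mem]
        exact Finset.mem_image.mpr ⟨v, by simp [hv, h.ne.symm], by simp [mergeVertex]⟩
      rw [← image_erase]
      exact key h.symm (mem_faces_of_subset hu (u.erase_subset t) ⟨v, by simp [hv, h.ne.symm]⟩)
        (Finset.notMem_erase t u)
    · exact key h.symm hu ht
  · exact key h hu hv

theorem isLinkNormal_mergeVertices (h : K.IsContractible d t v w) :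
    (K.mergeVertices t v w).IsLinkNormal d where
  nonempty := h.isLinkNormal.nonempty.image _
  exists_superset _ := h.exists_superset
  exists_opposite s hs hc := by
    by_cases hw : w ∈ s
    · obtain ⟨γ, hγ, rfl⟩ : ∃ γ, w ∉ γ ∧ insert w γ = s :=
        ⟨s.erase w, s.notMem_erase w, Finset.insert_erase hw⟩
      rw [Finset.card_insert_of_notMem hγ] at hc
      obtain ⟨ht, hv, hK | hK⟩ := (h.insert_mem_mergeVertices hγ).mp hs
      · exact h.exists_opposite_insert hγ hc ht hv hK
      · exact mergeVertices_comm K t v w ▸ h.symm.exists_opposite_insert hγ hc hv ht hK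
    · exact h.exists_opposite hw hs hc
  connected s hc x y hx hy := by
    by_cases hw : w ∈ s
    · rw [← Finset.insert_erase hw] at hx hy ⊢
      exact h.connected_insert (s.notMem_erase w) (by rwa [Finset.card_erase_add_one hw]) hx hy
    · exact h.connected hw hc hx hy

end IsContractible
end Contraction

section EdgeContractionAt

variable {K : SComplex} {d t v w : ℕ}

namespace IsContractible

theorem card_facets_eq_one_iff (h : K.IsContractible d t v w) {r : Finset ℕ} (hr : r ∈ K.faces)
    (hc : r.card = d) (ht : t ∉ r) (hv : v ∉ r) :
    ((K.faces.filter fun α ↦ t ∉ α ∧ v ∉ α).filter fun F ↦ F.card = d + 1 ∧ r ⊆ F).card = 1 ↔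
      insert t r ∈ K.faces ∨ insert v r ∈ K.faces := by
  obtain ⟨x, y, hxy, hz⟩ := h.isLinkNormal.exists_opposite r hr hc
  have facets : ((K.faces.filter fun α ↦ t ∉ α ∧ v ∉ α).filter fun F ↦ F.card = d + 1 ∧ r ⊆ F) =
      (({x, y} : Finset ℕ).filter fun z ↦ z ≠ t ∧ z ≠ v).image (insert · r) := by
    rw [Finset.filter_comm]
    ext F
    rw [Finset.mem_filter, mem_filter_facets_iff hc]
    simp only [hz, Finset.mem_image, Finset.mem_filter, Finset.mem_insert, Finset.mem_singleton]
    grind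
  have mem_lk {u : ℕ} (hu : u ∉ r) : insert u r ∈ K.faces ↔ u = x ∨ u = y := by
    rw [← hz, singleton_mem_lk, and_iff_right hu]
  have insert_injOn : Set.InjOn (insert · r)
      (({x, y} : Finset ℕ).filter fun z ↦ z ≠ t ∧ z ≠ v : Finset ℕ) := fun a ha b _ hab ↦ by
    refine (Finset.insert_inj (singleton_mem_lk.mp ((hz a).mpr ?_)).1).mp hab
    simpa using (Finset.mem_filter.mp ha).1
  have notMem_lk_of_mem_lk := h.notMem_lk_of_mem_lk hc
  rw [hz, hz] at notMem_lk_of_mem_lk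
  rw [facets, Finset.card_image_of_injOn insert_injOn, mem_lk ht, mem_lk hv, Finset.filter_insert,
    Finset.filter_singleton]
  have := h.ne
  split_ifs <;> grind

theorem mem_bdryFaces (h : K.IsContractible d t v w) {s : Finset ℕ} :
    s ∈ bdryFaces (K.faces.filter fun α ↦ t ∉ α ∧ v ∉ α) d ↔
      s ∈ K.faces ∧ t ∉ s ∧ v ∉ s ∧ (insert t s ∈ K.faces ∨ insert v s ∈ K.faces) := by
  have of_insert {t v : ℕ} (h : K.IsContractible d t v w) (ht : t ∉ s) (hv : v ∉ s)
      (hs : s.Nonempty) (hK : insert t s ∈ K.faces) :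
      ∃ r ∈ K.faces, t ∉ r ∧ v ∉ r ∧ s ⊆ r ∧ r.card = d ∧ insert t r ∈ K.faces := by
    obtain ⟨F, hF, hsF, hc, hvF⟩ := h.isLinkNormal.exists_facet_notMem hK (v := v) (by grind [h.ne])
    have htF : t ∈ F := hsF (Finset.mem_insert_self t s)
    have hsF' : s ⊆ F.erase t := by grind
    exact ⟨F.erase t, mem_faces_of_subset hF (F.erase_subset t) (hs.mono hsF'), by grind, by grind,
      hsF', by rw [Finset.card_erase_of_mem htF, hc]; rfl, by rwa [Finset.insert_erase htF]⟩
  rw [bdryFaces, Finset.mem_filter, Finset.mem_filter]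
  constructor
  · rintro ⟨⟨hs, ht, hv⟩, r, hr, hsr, hc, hone⟩
    rw [Finset.mem_filter] at hr
    refine ⟨hs, ht, hv, ((h.card_facets_eq_one_iff hr.1 hc hr.2.1 hr.2.2).mp hone).imp ?_ ?_⟩ <;>
    exact fun hK ↦ mem_faces_of_subset hK (Finset.insert_subset_insert _ hsr) (by simp)
  · rintro ⟨hs, ht, hv, hK⟩
    obtain ⟨r, hr, htr, hvr, hsr, hc, hK⟩ : ∃ r ∈ K.faces, t ∉ r ∧ v ∉ r ∧ s ⊆ r ∧ r.card = d ∧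
        (insert t r ∈ K.faces ∨ insert v r ∈ K.faces) := by
      obtain hK | hK := hK
      · have := of_insert h ht hv (nonempty_of_mem_faces hs) hK
        grind
      · have := of_insert h.symm hv ht (nonempty_of_mem_faces hs) hK
        grind
    exact ⟨⟨hs, ht, hv⟩, r, Finset.mem_filter.mpr ⟨hr, htr, hvr⟩, hsr, hc,
      (h.card_facets_eq_one_iff hr hc htr hvr).mpr hK⟩

theorem faces_mergeVertices (h : K.IsContractible d t v w) :
    (K.mergeVertices t v w).faces = (K.faces.filter fun α ↦ t ∉ α ∧ v ∉ α) ∪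
      coneFaces w (bdryFaces (K.faces.filter fun α ↦ t ∉ α ∧ v ∉ α) d) := by
  ext s
  simp only [coneFaces, Finset.mem_union, Finset.mem_image, Finset.mem_singleton, h.mem_bdryFaces,
    Finset.mem_filter]
  have mem_of_insert {u : ℕ} {γ : Finset ℕ} (hγ : γ.Nonempty) (hK : insert u γ ∈ K.faces) :
      γ ∈ K.faces := mem_faces_of_subset hK (Finset.subset_insert u γ) hγ
  have htK : {t} ∈ K.faces := mem_faces_of_subset h.edge (by simp) (by simp)
  by_cases hw : w ∈ s
  · obtain ⟨γ, hγ, rfl⟩ : ∃ γ, w ∉ γ ∧ insert w γ = s :=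
      ⟨s.erase w, s.notMem_erase w, Finset.insert_erase hw⟩
    have insert_inj {a : Finset ℕ} (ha : a ∈ K.faces) (e : insert w a = insert w γ) : a = γ := by
      rw [← Finset.erase_insert (h.fresh a ha), e, Finset.erase_insert hγ]
    have notMem : insert w γ ∉ K.faces := fun hK ↦ h.fresh _ hK hw
    rw [h.insert_mem_mergeVertices hγ]
    obtain rfl | hne := γ.eq_empty_or_nonempty
    · simp [htK]
    · have : insert w γ ≠ {w} := fun e ↦ hγ <|
        Finset.mem_singleton.mp (e ▸ Finset.mem_insert_of_mem hne.choose_spec) ▸ hne.choose_spec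
      grind
  · rw [h.mem_mergeVertices hw]
    grind

theorem edgeContractionAt (h : K.IsContractible d t v w) :
    EdgeContractionAt d K t v (K.mergeVertices t v w) := by
  refine ⟨h.edge, h.ne, ?_, w, fun hw ↦ ?_, h.faces_mergeVertices⟩
  · ext γ
    have := h.linkCondition γ
    rw [Finset.mem_inter, mem_lk, mem_lk, mem_lk, Finset.union_comm, Finset.union_comm γ,
      Finset.union_comm γ]
    simp only [Finset.disjoint_singleton_right, Finset.disjoint_insert_right, Finset.insert_union,
      Finset.singleton_union]
    refine ⟨by grind, fun ⟨hγ, hd, hK⟩ ↦ ⟨⟨hγ, hd.1, ?_⟩, hγ, hd.2, ?_⟩⟩ <;>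
    exact mem_faces_of_subset hK (by grind) (by simp)
  · exact h.fresh _ (mem_vertexSet.mp hw) (Finset.mem_singleton_self w)

end IsContractible

theorem fnum_zero (K : SComplex) : K.fnum 0 = K.vertexSet.card := by
  have : K.faces.filter (fun s ↦ s.card = 0 + 1) = K.vertexSet.image ({·}) := by
    ext s
    simp only [Finset.mem_filter, Finset.mem_image, mem_vertexSet, zero_add, Finset.card_eq_one]
    grind
  rw [fnum, this, Finset.card_image_of_injective _ Finset.singleton_injective]

theorem vertexSet_mergeVertices (K : SComplex) (t v w : ℕ) :
    (K.mergeVertices t v w).vertexSet = K.vertexSet.image (mergeVertex t v w) := by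
  ext x
  simp only [vertexSet, mergeVertices, Finset.mem_sup, Finset.mem_image, id_eq]
  grind

namespace IsContractible

theorem exists_edge_of_mem_mergeVertices (h : K.IsContractible d t v w) {e : Finset ℕ}
    (he : e ∈ (K.mergeVertices t v w).faces) (hc : e.card = 2) :
    ∃ s ∈ K.faces, s.card = 2 ∧ ¬ (t ∈ s ∧ insert v s ∈ K.faces) ∧
      s.image (mergeVertex t v w) = e := by
  by_cases hw : w ∈ e
  · obtain ⟨x, hxe⟩ : ∃ x, e.erase w = {x} := Finset.card_eq_one.mp (by simp [hw, hc])
    have hxw : w ∉ ({x} : Finset ℕ) := hxe ▸ e.notMem_erase w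
    obtain rfl : insert w {x} = e := hxe ▸ Finset.insert_erase hw
    obtain ⟨htx, hvx, hK⟩ := (h.insert_mem_mergeVertices hxw).mp he
    by_cases hvK : {v, x} ∈ K.faces
    · exact ⟨{v, x}, hvK, Finset.card_pair (by grind), by grind [h.ne],
        (image_mergeVertex_insert htx hvx v).trans (by simp [mergeVertex])⟩
    · refine ⟨{t, x}, hK.resolve_right hvK, Finset.card_pair (by grind), fun hmem ↦ hvK ?_,
        (image_mergeVertex_insert htx hvx t).trans (by simp [mergeVertex])⟩
      exact mem_faces_of_subset hmem.2 (by grind) (by simp)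
  · obtain ⟨ht, hv, heK⟩ := (h.mem_mergeVertices hw).mp he
    exact ⟨e, heK, hc, by simp [ht], image_mergeVertex ht hv⟩

/-- The edge `tv` and the edges joining `t` to the vertices of the link of `tv` disappear. -/
theorem fnum_one_mergeVertices_add_deg_lt (h : K.IsContractible d t v w) :
    (K.mergeVertices t v w).fnum 1 + K.deg {t, v} < K.fnum 1 := by
  set E := K.faces.filter (fun s ↦ s.card = 1 + 1) with hE
  set D := E.filter fun s ↦ t ∈ s ∧ insert v s ∈ K.faces
  have mem_link {x : ℕ} : x ∈ (K.lk {t, v}).vertexSet ↔ (x ≠ t ∧ x ≠ v) ∧ {x, t, v} ∈ K.faces := by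
    simp [mem_vertexSet, singleton_mem_lk]
  have hD : K.deg {t, v} + 1 ≤ D.card := by
    rw [deg, fnum_zero, ← Finset.card_insert_of_notMem (a := v) (by simp [mem_link])]
    refine Finset.card_le_card_of_injOn (fun x ↦ {t, x}) (fun x hx ↦ ?_) (fun x hx y hy hxy ↦ ?_)
    · have hne := h.ne
      simp only [Finset.coe_insert, Set.mem_insert_iff, Finset.mem_coe, mem_link] at hx
      have hK : {v, t, x} ∈ K.faces := by
        obtain rfl | ⟨-, hx⟩ := hx
        · simpa [Finset.pair_comm] using h.edge
        · convert hx using 1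
          grind
      simp only [D, hE, Finset.coe_filter, Finset.mem_filter, Set.mem_ofPred_eq]
      exact ⟨⟨mem_faces_of_subset hK (by simp) (by simp), Finset.card_pair (by grind)⟩,
        by simp, hK⟩
    · have hne := h.ne
      simp only [Finset.coe_insert, Set.mem_insert_iff, Finset.mem_coe, mem_link] at hx hy
      have : y ∈ ({t, x} : Finset ℕ) := by simp [hxy]
      grind
  have hle : (K.mergeVertices t v w).fnum 1 ≤ (E \ D).card := by
    refine (Finset.card_le_card fun e he ↦ ?_).trans
      (Finset.card_image_le (f := Finset.image (mergeVertex t v w)))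
    obtain ⟨he, hc⟩ := Finset.mem_filter.mp he
    obtain ⟨s, hs, hsc, hsD, rfl⟩ := h.exists_edge_of_mem_mergeVertices he hc
    exact Finset.mem_image_of_mem _ (by grind)
  have := Finset.card_sdiff_add_card_eq_card (Finset.filter_subset _ E : D ⊆ E)
  have hEK : K.fnum 1 = E.card := rfl
  lia

theorem fnum_zero_le (h : K.IsContractible d t v w) :
    K.fnum 0 ≤ (K.mergeVertices t v w).fnum 0 + 1 := by
  have hv : v ∈ K.vertexSet := mem_vertexSet.mpr (mem_faces_of_subset h.edge (by simp) (by simp))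
  have hw : w ∉ K.vertexSet := fun hw ↦ h.fresh _ (mem_vertexSet.mp hw) (by simp)
  rw [fnum_zero, fnum_zero, vertexSet_mergeVertices, ← Finset.card_erase_add_one hv,
    ← Finset.card_image_of_injOn (injOn_mergeVertex (t := t) (v := v) (w := w)
      (by grind) (K.vertexSet.notMem_erase v))]
  gcongr
  exact Finset.erase_subset _ _

theorem g2_mergeVertices_lt (h : K.IsContractible d t v w) (hd : 4 ≤ K.deg {t, v}) :
    (K.mergeVertices t v w).g2 < K.g2 := by
  have := h.fnum_one_mergeVertices_add_deg_lt
  have := h.fnum_zero_le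
  rw [g2, g2]
  lia

end IsContractible
end EdgeContractionAt

/-! ### Links as normal pseudomanifolds -/

section LinkOfFace

variable {K : SComplex} {d : ℕ} {σ s : Finset ℕ}

theorem faces_lk_lk (h : Disjoint s σ) : ((K.lk σ).lk s).faces = (K.lk (s ∪ σ)).faces := by
  ext u
  simp only [mem_lk, Finset.disjoint_union_left, Finset.disjoint_union_right, Finset.union_assoc]
  have : u.Nonempty → (u ∪ s).Nonempty := fun hu ↦ hu.mono Finset.subset_union_left
  tauto

theorem disjoint_of_mem_lk_lk {x : ℕ} (hx : {x} ∈ ((K.lk σ).lk s).faces) : Disjoint s σ :=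
  (mem_lk.mp (singleton_mem_lk.mp hx).2).2.1.mono_left (Finset.subset_insert x s)

theorem deg_lk (h : Disjoint s σ) : (K.lk σ).deg s = K.deg (s ∪ σ) := by
  rw [deg, deg, fnum, fnum, faces_lk_lk h]

theorem IsLinkNormal.lk (h : K.IsLinkNormal (σ.card + d)) (hσ : σ ∈ K.faces) :
    (K.lk σ).IsLinkNormal d where
  nonempty :=
    let ⟨_, hx⟩ := h.exists_mem_lk (.inr hσ) (by lia)
    ⟨_, hx⟩
  exists_superset s hs := by
    obtain ⟨hne, hd, hK⟩ := mem_lk.mp hs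
    obtain ⟨F, hF, hsF, hc⟩ := h.exists_superset _ hK
    have hσF : σ ⊆ F := Finset.subset_union_right.trans hsF
    have hsF' : s ⊆ F \ σ :=
      Finset.subset_sdiff.mpr ⟨Finset.subset_union_left.trans hsF, hd⟩
    exact ⟨F \ σ, mem_lk.mpr ⟨hne.mono hsF', Finset.sdiff_disjoint,
      by rwa [Finset.sdiff_union_of_subset hσF]⟩, hsF',
      by rw [Finset.card_sdiff_of_subset hσF, hc]; lia⟩
  exists_opposite s hs hc := by
    obtain ⟨-, hd, hK⟩ := mem_lk.mp hs
    rw [faces_lk_lk hd]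
    exact h.exists_opposite _ hK (by rw [Finset.card_union_of_disjoint hd, hc, add_comm])
  connected s hc x y hx hy := by
    have hd := disjoint_of_mem_lk_lk hx
    have hadj (a b : ℕ) :
        (K.lk (s ∪ σ)).VertAdj a b → ((K.lk σ).lk s).VertAdj a b := by
      rw [VertAdj, VertAdj, faces_lk_lk hd]
      exact id
    rw [faces_lk_lk hd] at hx hy
    exact Relation.ReflTransGen.mono hadj _ _ <|
      h.connected _ (by rw [Finset.card_union_of_disjoint hd]; lia) x y hx hy

end LinkOfFace

/-! ### Boundaries of simplices -/

section SimplexBoundary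

variable {K : SComplex} {d : ℕ} {V : Finset ℕ}

theorem mem_properFaces {s : Finset ℕ} : s ∈ properFaces V ↔ s ⊂ V ∧ s.Nonempty := by
  rw [properFaces, Finset.mem_filter, Finset.mem_powerset, Finset.ssubset_iff_subset_ne,
    Finset.nonempty_iff_ne_empty]
  tauto

theorem IsLinkNormal.facetAdj_subset (h : K.IsLinkNormal d) (hd : 0 < d)
    (hV : properFaces V ⊆ K.faces) (hc : V.card = d + 2) {F G : Finset ℕ} (hFG : K.FacetAdj F G)
    (hF : F ⊆ V) : G ⊆ V := by
  have hcF := (h.isFacet_iff.mp hFG.1).2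
  have hcG := (h.isFacet_iff.mp hFG.2.1).2
  obtain ⟨s, hs⟩ : ∃ s, s = F ∩ G := ⟨_, rfl⟩
  have hcs := hs ▸ hFG.2.2
  have hsV : s ⊆ V := hs ▸ Finset.inter_subset_left.trans hF
  obtain ⟨z, hz, rfl⟩ := exists_insert_of_subset (hs ▸ Finset.inter_subset_right : s ⊆ G) (by lia)
  obtain ⟨a, b, hab, hVs⟩ : ∃ a b, a ≠ b ∧ V \ s = {a, b} :=
    Finset.card_eq_two.mp (by rw [Finset.card_sdiff_of_subset hsV]; lia)
  obtain ⟨x, y, -, hxy⟩ := h.exists_opposite s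
    (mem_faces_of_subset hFG.2.1.1 (Finset.subset_insert z s) (Finset.card_pos.mp (by lia)))
    (by lia)
  have mem_link {c : ℕ} (hcV : c ∈ V \ s) : c = x ∨ c = y := by
    obtain ⟨hcV, hcs'⟩ := Finset.mem_sdiff.mp hcV
    refine (hxy c).mp (singleton_mem_lk.mpr ⟨hcs', hV (mem_properFaces.mpr ⟨?_, by simp⟩)⟩)
    refine (Finset.insert_subset hcV hsV).ssubset_of_ne fun e ↦ ?_
    have := e ▸ Finset.card_insert_of_notMem hcs'
    lia
  have hzxy := (hxy z).mp (singleton_mem_lk.mpr ⟨hz, hFG.2.1.1⟩)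
  have ha := mem_link (c := a) (by simp [hVs])
  have hb := mem_link (c := b) (by simp [hVs])
  have hzV : z ∈ V \ s := by
    rw [hVs, Finset.mem_insert, Finset.mem_singleton]
    lia
  exact Finset.insert_subset (Finset.mem_sdiff.mp hzV).1 hsV

theorem IsLinkNormal.faces_eq_properFaces (h : K.IsLinkNormal d) (hd : 0 < d)
    (hV : properFaces V ⊆ K.faces) (hc : V.card = d + 2) : K.faces = properFaces V := by
  obtain ⟨a, ha⟩ : V.Nonempty := Finset.card_pos.mp (by lia)
  have hF : K.IsFacet (V.erase a) := by
    have hcF : (V.erase a).card = d + 1 := by rw [Finset.card_erase_of_mem ha, hc]; rfl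
    exact h.isFacet_iff.mpr ⟨hV (mem_properFaces.mpr
      ⟨Finset.erase_ssubset ha, Finset.card_pos.mp (by lia)⟩), hcF⟩
  refine (hV.antisymm fun s hs ↦ ?_).symm
  obtain ⟨G, hG, hsG⟩ := h.exists_facet hs
  have hGV : G ⊆ V := by
    have path := h.reflTransGen_starAdj ∅ hF hG (Finset.empty_subset _) (Finset.empty_subset _)
    clear hsG
    induction path with
    | refl => exact V.erase_subset a
    | tail _ hAB ih => exact h.facetAdj_subset hd hV hc hAB.1 (ih hAB.1.1)
  refine mem_properFaces.mpr ⟨(hsG.trans hGV).ssubset_of_ne fun e ↦ ?_, nonempty_of_mem_faces hs⟩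
  have := e ▸ h.card_le hs
  lia

end SimplexBoundary

/-! ### Face counts -/

section Counting

variable {K : SComplex} {d : ℕ}

theorem IsLinkNormal.mul_fnum_succ (h : K.IsLinkNormal (d + 1)) :
    (d + 2) * K.fnum (d + 1) = 2 * K.fnum d := by
  rw [mul_comm, mul_comm 2, fnum, fnum]
  refine Finset.card_mul_eq_card_mul (fun F s ↦ s ⊆ F) (fun F hF ↦ ?_) (fun s hs ↦ ?_)
  · obtain ⟨hF, hc⟩ := Finset.mem_filter.mp hF
    suffices Finset.bipartiteAbove (fun F s ↦ s ⊆ F) (K.faces.filter (·.card = d + 1)) F =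
        F.powersetCard (d + 1) by
      rw [this, Finset.card_powersetCard, hc, Nat.choose_succ_self_right]
    ext s
    rw [Finset.mem_bipartiteAbove, Finset.mem_filter, Finset.mem_powersetCard]
    exact ⟨fun hs ↦ ⟨hs.2, hs.1.2⟩, fun hs ↦
      ⟨⟨mem_faces_of_subset hF hs.1 (Finset.card_pos.mp (by lia)), hs.2⟩, hs.1⟩⟩
  · obtain ⟨hs, hc⟩ := Finset.mem_filter.mp hs
    rw [Finset.bipartiteBelow, Finset.filter_filter]
    exact (card_filter_facets_eq_two_iff hc).mpr (h.exists_opposite s hs hc)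

theorem deg_singleton (K : SComplex) (v : ℕ) :
    K.deg {v} = ((K.faces.filter fun s ↦ s.card = 1 + 1).filter fun s ↦ v ∈ s).card := by
  rw [deg, fnum_zero]
  refine Finset.card_bij (fun x _ ↦ {x, v}) (fun x hx ↦ ?_) (fun x hx y _ hxy ↦ ?_)
    (fun s hs ↦ ?_)
  · obtain ⟨hxv, hK⟩ := singleton_mem_lk.mp (mem_vertexSet.mp hx)
    rw [Finset.mem_singleton] at hxv
    simpa [Finset.card_pair hxv] using hK
  · exact (Finset.insert_inj (singleton_mem_lk.mp (mem_vertexSet.mp hx)).1).mp hxy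
  · simp only [Finset.mem_filter] at hs
    obtain ⟨x, hx, rfl⟩ :=
      exists_insert_of_subset (Finset.singleton_subset_iff.mpr hs.2) (by simp [hs.1.2])
    exact ⟨x, mem_vertexSet.mpr (singleton_mem_lk.mpr ⟨hx, hs.1.1⟩), rfl⟩

theorem sum_deg (K : SComplex) : ∑ v ∈ K.vertexSet, K.deg {v} = 2 * K.fnum 1 := by
  simp only [deg_singleton]
  have := Finset.sum_card_bipartiteAbove_eq_sum_card_bipartiteBelow (s := K.vertexSet)
    (t := K.faces.filter fun s ↦ s.card = 1 + 1) (fun v s ↦ v ∈ s)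
  simp only [Finset.bipartiteAbove] at this
  rw [this, mul_comm, fnum, ← smul_eq_mul]
  refine Finset.sum_eq_card_nsmul fun s hs ↦ ?_
  obtain ⟨hs, hc⟩ := Finset.mem_filter.mp hs
  refine Eq.trans (congrArg Finset.card ?_) hc
  ext x
  rw [Finset.mem_bipartiteBelow, mem_vertexSet, and_iff_right_iff_imp]
  exact fun hx ↦ mem_faces_of_subset hs (by simpa) (by simp)

end Counting

/-! ### Homology modulo two -/

section Exactness

open scoped Matrix

theorem finrank_le_one_of_forall_eq {ι 𝕜 : Type*} [Finite ι] [Field 𝕜] {W : Submodule 𝕜 (ι → 𝕜)}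
    (hW : ∀ x ∈ W, ∀ i j, x i = x j) : Module.finrank 𝕜 W ≤ 1 := by
  have hle : W ≤ 𝕜 ∙ (1 : ι → 𝕜) := by
    intro x hx
    rw [Submodule.mem_span_singleton]
    obtain h | ⟨⟨i⟩⟩ := isEmpty_or_nonempty ι
    · exact ⟨0, Subsingleton.elim _ _⟩
    · exact ⟨x i, by funext j; simpa using hW x hx i j⟩
  exact (Submodule.finrank_mono hle).trans ((finrank_span_le_card _).trans (by simp))

/-- The outer homology of the complex `𝕜 ^ p → 𝕜 ^ n → 𝕜 ^ m` is at most one-dimensional, so an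
Euler characteristic of at least two leaves no homology in the middle. -/
theorem exists_mulVec_eq_of_mul_eq_zero {m n p 𝕜 : Type*} [Fintype m] [Fintype n] [Fintype p]
    [Field 𝕜] {A : Matrix m n 𝕜} {B : Matrix n p 𝕜} (hAB : A * B = 0)
    (hA : ∀ y, y ᵥ* A = 0 → ∀ i j, y i = y j) (hB : ∀ x, B *ᵥ x = 0 → ∀ i j, x i = x j)
    (hcard : Fintype.card n + 2 ≤ Fintype.card m + Fintype.card p) {z : n → 𝕜}
    (hz : A *ᵥ z = 0) : ∃ x, B *ᵥ x = z := by
  classical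
  have hle : B.mulVecLin.range ≤ A.mulVecLin.ker := by
    rintro _ ⟨x, rfl⟩
    simp [Matrix.mulVec_mulVec, hAB]
  have hkerB := finrank_le_one_of_forall_eq (W := B.mulVecLin.ker)
    fun x hx ↦ hB x (by simpa using hx)
  have hkerA := finrank_le_one_of_forall_eq (W := Aᵀ.mulVecLin.ker)
    fun y hy ↦ hA y (by simpa using hy)
  have hrB := B.mulVecLin.finrank_range_add_finrank_ker
  have hrA := A.mulVecLin.finrank_range_add_finrank_ker
  have hrAt := Aᵀ.mulVecLin.finrank_range_add_finrank_ker
  have htr := A.rank_transpose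
  rw [Matrix.rank, Matrix.rank] at htr
  simp only [Module.finrank_fintype_fun_eq_card] at hrA hrB hrAt
  have heq := Submodule.eq_of_le_of_finrank_le hle (by lia)
  have hmem : z ∈ A.mulVecLin.ker := by simpa using hz
  rwa [← heq] at hmem

end Exactness

/-- The set of `i`-dimensional faces. -/
def simplices (K : SComplex) (i : ℕ) : Finset (Finset ℕ) := K.faces.filter (·.card = i + 1)

/-- The matrix of the simplicial boundary map with coefficients modulo two, from the chains of
dimension `i + 1` to those of dimension `i`. -/
def boundaryMatrix (K : SComplex) (i : ℕ) :
    Matrix (K.simplices i) (K.simplices (i + 1)) (ZMod 2) :=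
  Matrix.of fun s F ↦ if s.1 ⊆ F.1 then 1 else 0

section Homology

open scoped Matrix

variable {K : SComplex} {d i : ℕ}

theorem mem_simplices {s : Finset ℕ} : s ∈ K.simplices i ↔ s ∈ K.faces ∧ s.card = i + 1 :=
  Finset.mem_filter

theorem even_card_between {s F : Finset ℕ} (hF : F ∈ K.faces) (hc : F.card = s.card + 2) :
    Even ((K.simplices s.card).filter fun e ↦ s ⊆ e ∧ e ⊆ F).card := by
  by_cases hsF : s ⊆ F
  · suffices (K.simplices s.card).filter (fun e ↦ s ⊆ e ∧ e ⊆ F) = (F \ s).image (insert · s) by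
      rw [this, Finset.card_image_of_injOn fun a ha b _ hab ↦
        (Finset.insert_inj (Finset.mem_sdiff.mp ha).2).mp hab, Finset.card_sdiff_of_subset hsF, hc]
      simp
    ext e
    simp only [Finset.mem_filter, mem_simplices, Finset.mem_image, Finset.mem_sdiff]
    constructor
    · rintro ⟨⟨-, he⟩, hse, heF⟩
      obtain ⟨x, hx, rfl⟩ := exists_insert_of_subset hse he
      exact ⟨x, ⟨heF (Finset.mem_insert_self x s), hx⟩, rfl⟩
    · rintro ⟨x, ⟨hxF, hx⟩, rfl⟩
      have hxsF := Finset.insert_subset hxF hsF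
      exact ⟨⟨mem_faces_of_subset hF hxsF (by simp), Finset.card_insert_of_notMem hx⟩,
        Finset.subset_insert x s, hxsF⟩
  · rw [Finset.filter_false_of_mem fun e _ he ↦ hsF (he.1.trans he.2)]
    simp

theorem boundaryMatrix_mul_boundaryMatrix (K : SComplex) (i : ℕ) :
    K.boundaryMatrix i * K.boundaryMatrix (i + 1) = 0 := by
  ext ⟨s, hs⟩ ⟨F, hF⟩
  obtain ⟨-, hsc⟩ := mem_simplices.mp hs
  obtain ⟨hFK, hFc⟩ := mem_simplices.mp hF
  simp only [Matrix.mul_apply, boundaryMatrix, Matrix.of_apply, Matrix.zero_apply, mul_ite,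
    mul_one, mul_zero, ← ite_and]
  rw [Finset.sum_coe_sort (K.simplices (i + 1)) fun e ↦
      if e ⊆ F ∧ s ⊆ e then (1 : ZMod 2) else 0, ← Finset.sum_filter, Finset.sum_const,
    nsmul_one, ZMod.natCast_eq_zero_iff_even]
  simpa only [hsc, and_comm] using even_card_between hFK (s := s) (by lia)

theorem IsLinkNormal.exists_boundaryMatrix_mulVec (h : K.IsLinkNormal (i + 1))
    (x : K.simplices (i + 1) → ZMod 2) {F G : K.simplices (i + 1)} (hFG : K.FacetAdj F.1 G.1) :
    ∃ hs : F.1 ∩ G.1 ∈ K.simplices i, (K.boundaryMatrix i *ᵥ x) ⟨_, hs⟩ = x F + x G := by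
  obtain ⟨hF, hFc⟩ := mem_simplices.mp F.2
  have hc : (F.1 ∩ G.1).card = i + 1 := by have := hFG.2.2; lia
  have hs : F.1 ∩ G.1 ∈ K.faces :=
    mem_faces_of_subset hF Finset.inter_subset_left (Finset.card_pos.mp (by lia))
  have hne : F ≠ G := by
    rintro rfl
    rw [Finset.inter_self] at hc
    lia
  refine ⟨mem_simplices.mpr ⟨hs, hc⟩, ?_⟩
  have hpair : Finset.univ.filter (fun H : K.simplices (i + 1) ↦ F.1 ∩ G.1 ⊆ H.1) = {F, G} := by
    refine (Finset.eq_of_subset_of_card_le (by grind) ?_).symm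
    rw [Finset.card_pair hne, ← (card_filter_facets_eq_two_iff hc).mpr (h.exists_opposite _ hs hc)]
    refine Finset.card_le_card_of_injOn Subtype.val (fun H hH ↦ ?_) Subtype.val_injective.injOn
    have := mem_simplices.mp H.2
    grind
  simp only [Matrix.mulVec, dotProduct, boundaryMatrix, Matrix.of_apply, ite_mul, one_mul, zero_mul]
  rw [← Finset.sum_filter, hpair, Finset.sum_pair hne]

theorem vecMul_boundaryMatrix (y : K.simplices 0 → ZMod 2) {a b : ℕ} (hab : a ≠ b)
    (ha : {a} ∈ K.simplices 0) (hb : {b} ∈ K.simplices 0) (he : {a, b} ∈ K.simplices 1) :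
    (y ᵥ* K.boundaryMatrix 0) ⟨_, he⟩ = y ⟨_, ha⟩ + y ⟨_, hb⟩ := by
  have hpair : Finset.univ.filter (fun p : K.simplices 0 ↦ p.1 ⊆ {a, b}) = {⟨_, ha⟩, ⟨_, hb⟩} := by
    ext ⟨p, hp⟩
    obtain ⟨c, rfl⟩ := Finset.card_eq_one.mp (mem_simplices.mp hp).2
    simp
  simp only [Matrix.vecMul, dotProduct, boundaryMatrix, Matrix.of_apply, mul_ite, mul_one, mul_zero]
  rw [← Finset.sum_filter, hpair, Finset.sum_pair (by simpa using hab)]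

theorem IsLinkNormal.eq_of_boundaryMatrix_mulVec_eq_zero (h : K.IsLinkNormal (i + 1))
    {x : K.simplices (i + 1) → ZMod 2} (hx : K.boundaryMatrix i *ᵥ x = 0)
    (F G : K.simplices (i + 1)) : x F = x G := by
  obtain ⟨G, hG⟩ := G
  have path := h.reflTransGen_starAdj ∅ (h.isFacet_iff.mpr (mem_simplices.mp F.2))
    (h.isFacet_iff.mpr (mem_simplices.mp hG)) (Finset.empty_subset _) (Finset.empty_subset _)
  induction path with
  | refl => rfl
  | @tail A B _ hAB ih =>
    have hA : A ∈ K.simplices (i + 1) := mem_simplices.mpr (h.isFacet_iff.mp hAB.1.1)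
    obtain ⟨hs, e⟩ := h.exists_boundaryMatrix_mulVec x (F := ⟨A, hA⟩) (G := ⟨B, hG⟩) hAB.1
    rw [ih hA, ← CharTwo.add_eq_zero, ← e, hx]
    rfl

theorem IsLinkNormal.eq_of_vecMul_boundaryMatrix_eq_zero (h : K.IsLinkNormal d)
    (hd : 0 < d) {y : K.simplices 0 → ZMod 2} (hy : y ᵥ* K.boundaryMatrix 0 = 0)
    (p q : K.simplices 0) : y p = y q := by
  have mem_lk_empty {u : Finset ℕ} : u ∈ (K.lk ∅).faces ↔ u ∈ K.faces := by
    simp only [mem_lk, Finset.disjoint_empty_right, Finset.union_empty, true_and,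
      and_iff_right_iff_imp]
    exact nonempty_of_mem_faces
  obtain ⟨p, hp⟩ := p
  obtain ⟨q, hq⟩ := q
  obtain ⟨a, rfl⟩ := Finset.card_eq_one.mp (mem_simplices.mp hp).2
  obtain ⟨b, rfl⟩ := Finset.card_eq_one.mp (mem_simplices.mp hq).2
  have path := h.connected ∅ (by simpa) a b (mem_lk_empty.mpr (mem_simplices.mp hp).1)
    (mem_lk_empty.mpr (mem_simplices.mp hq).1)
  induction path with
  | refl => rfl
  | @tail b c _ hbc ih =>
    rw [VertAdj, mem_lk_empty] at hbc
    have hb : {b} ∈ K.simplices 0 := mem_simplices.mpr ⟨VertAdj.left hbc, rfl⟩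
    rw [ih hb]
    obtain rfl | hne := eq_or_ne b c
    · rfl
    · have e := vecMul_boundaryMatrix y hne hb hq (mem_simplices.mpr ⟨hbc, Finset.card_pair hne⟩)
      rw [← CharTwo.add_eq_zero, ← e, hy]
      rfl

/-- This is the vanishing of the first homology modulo two. -/
theorem IsLinkNormal.exists_coloring_of_cycle (h : K.IsLinkNormal 2) (hχ : 2 ≤ K.euler)
    {z : Finset ℕ → ZMod 2} (hz : ∀ p, {p} ∈ K.faces → ∑ e ∈ K.simplices 1 with p ∈ e, z e = 0) :
    ∃ x : Finset ℕ → ZMod 2, ∀ F G, K.FacetAdj F G → x F + x G = z (F ∩ G) := by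
  classical
  obtain ⟨x, hx⟩ := exists_mulVec_eq_of_mul_eq_zero (K.boundaryMatrix_mul_boundaryMatrix 0)
    (fun y ↦ h.eq_of_vecMul_boundaryMatrix_eq_zero two_pos)
    (fun x ↦ h.eq_of_boundaryMatrix_mulVec_eq_zero) (z := fun e ↦ z e) (by
      have hf (i : ℕ) : Fintype.card (K.simplices i) = K.fnum i := Fintype.card_coe _
      rw [euler] at hχ
      rw [hf, hf, hf]
      lia) (by
      funext ⟨p, hp⟩
      obtain ⟨a, rfl⟩ := Finset.card_eq_one.mp (mem_simplices.mp hp).2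
      simp only [Matrix.mulVec, dotProduct, boundaryMatrix, Matrix.of_apply, ite_mul, one_mul,
        zero_mul, Finset.singleton_subset_iff, Pi.zero_apply]
      refine Eq.trans ?_ (hz a (mem_simplices.mp hp).1)
      rw [Finset.sum_filter]
      exact Finset.sum_coe_sort (K.simplices 1) fun e ↦ if a ∈ e then z e else 0)
  refine ⟨fun F ↦ if hF : F ∈ K.simplices 2 then x ⟨F, hF⟩ else 0, fun F G hFG ↦ ?_⟩
  have hF : F ∈ K.simplices 2 := mem_simplices.mpr (h.isFacet_iff.mp hFG.1)
  have hG : G ∈ K.simplices 2 := mem_simplices.mpr (h.isFacet_iff.mp hFG.2.1)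
  obtain ⟨hs, e⟩ := h.exists_boundaryMatrix_mulVec x (F := ⟨F, hF⟩) (G := ⟨G, hG⟩) hFG
  simp only [dif_pos hF, dif_pos hG]
  rw [← e]
  exact congrFun hx _

end Homology

/-! ### Geometric realizations -/

section Realization

variable {K : SComplex} {T : Finset ℕ} {w : ℕ → ℝ}

theorem mem_realSpace (hT : ∀ s ∈ K.faces, s ⊆ T) :
    w ∈ K.realSpace ↔ 0 ≤ w ∧ (∃ s ∈ K.faces, ∀ u ∉ s, w u = 0) ∧ ∑ u ∈ T, w u = 1 := by
  have sum_eq {s : Finset ℕ} (hs : s ∈ K.faces) (hw : ∀ u ∉ s, w u = 0) :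
      ∑ u ∈ s, w u = ∑ u ∈ T, w u := Finset.sum_subset (hT s hs) fun u _ hu ↦ hw u hu
  simp only [realSpace, Set.mem_ofPred_eq, ne_eq, not_imp_comm (b := _ ∈ _)]
  exact ⟨fun ⟨h0, s, hs, hw, h1⟩ ↦ ⟨h0, ⟨s, hs, hw⟩, sum_eq hs hw ▸ h1⟩,
    fun ⟨h0, ⟨s, hs, hw⟩, h1⟩ ↦ ⟨h0, s, hs, hw, (sum_eq hs hw).trans h1⟩⟩

theorem nonempty_homeomorph_of_relabel {K' : SComplex} (f : Equiv.Perm ℕ)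
    (hf : K'.faces = K.faces.image (Finset.image f)) :
    Nonempty (K.realSpace ≃ₜ K'.realSpace) := by
  refine ⟨(Homeomorph.piCongrLeft (Y := fun _ ↦ ℝ) f).subtype fun w ↦ ?_⟩
  have apply_eq (u : ℕ) : Homeomorph.piCongrLeft (Y := fun _ ↦ ℝ) f w (f u) = w u :=
    Equiv.piCongrLeft_apply_apply (fun _ ↦ ℝ) f w u
  simp only [realSpace, Set.mem_ofPred_eq, hf, Finset.exists_mem_image,
    Finset.sum_image f.injective.injOn, apply_eq]
  refine and_congr (f.forall_congr fun u ↦ by rw [apply_eq])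
    (exists_congr fun s ↦ and_congr_right' (and_congr_left' (f.forall_congr fun u ↦ ?_)))
  rw [apply_eq, f.injective.mem_finset_image]

end Realization

section Sphere

/-- Radial projection: if the positively homogeneous map `g` parametrizes a cone and the linear map
`f` inverts it, then the section `ℓ = 1` of the cone is homeomorphic to the unit sphere. -/
theorem nonempty_homeomorph_sphere_of_cone {E F : Type*} [NormedAddCommGroup E] [NormedSpace ℝ E]
    [AddCommGroup F] [Module ℝ F] [TopologicalSpace F] [ContinuousSMul ℝ F] {f : F →L[ℝ] E}
    {g : E → F} {ℓ : F →L[ℝ] ℝ} {S : Set F} (hg : Continuous g)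
    (hsmul : ∀ c : ℝ, 0 ≤ c → ∀ x, g (c • x) = c • g x) (hfg : ∀ x, f (g x) = x)
    (hpos : ∀ x ≠ 0, 0 < ℓ (g x)) (hS : ∀ y, y ∈ S ↔ g (f y) = y ∧ ℓ y = 1) :
    Nonempty (S ≃ₜ Metric.sphere (0 : E) 1) := by
  have f_ne_zero {y : F} (hy : y ∈ S) : f y ≠ 0 := by
    intro h0
    obtain ⟨hgy, hℓ⟩ := (hS y).mp hy
    have hg0 : g 0 = 0 := by simpa using hsmul 0 le_rfl 0
    rw [h0, hg0] at hgy
    simp [← hgy] at hℓ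
  have ne_zero {x : E} (hx : x ∈ Metric.sphere (0 : E) 1) : x ≠ 0 :=
    ne_zero_of_mem_unit_sphere ⟨x, hx⟩
  have hle (x : Metric.sphere (0 : E) 1) : 0 < ℓ (g x) := hpos x (ne_zero x.2)
  refine ⟨{
    toFun := fun y ↦ ⟨‖f y‖⁻¹ • f y, by
      simpa using norm_smul_inv_norm (𝕜 := ℝ) (f_ne_zero y.2)⟩
    invFun := fun x ↦ ⟨(ℓ (g x))⁻¹ • g x, (hS _).mpr ⟨?_, ?_⟩⟩
    left_inv := fun y ↦ Subtype.ext ?_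
    right_inv := fun x ↦ Subtype.ext ?_
    continuous_toFun := ?_
    continuous_invFun := ?_ }⟩
  · rw [map_smul, hfg, hsmul _ (inv_nonneg.mpr (hle x).le)]
  · rw [map_smul, smul_eq_mul, inv_mul_cancel₀ (hle x).ne']
  · obtain ⟨hgy, hℓ⟩ := (hS y).mp y.2
    have hy := norm_ne_zero_iff.mpr (f_ne_zero y.2)
    simp only [hsmul _ (inv_nonneg.mpr (norm_nonneg (f y))), hgy, map_smul, hℓ, smul_smul]
    simp [hy]
  · simp only [map_smul, hfg, norm_smul, norm_inv, norm_eq_of_mem_sphere, mul_one, inv_inv,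
      smul_smul, Real.norm_of_nonneg (hle x).le, mul_inv_cancel₀ (hle x).ne', one_smul]
  · have hf : Continuous fun y : S ↦ f y := f.continuous.comp continuous_subtype_val
    exact ((hf.norm.inv₀ fun y ↦ norm_ne_zero_iff.mpr (f_ne_zero y.2)).smul hf).subtype_mk _
  · have hg' : Continuous fun x : Metric.sphere (0 : E) 1 ↦ g x := hg.comp continuous_subtype_val
    exact (((ℓ.continuous.comp hg').inv₀ fun x ↦ (hle x).ne').smul hg').subtype_mk _

end Sphere

section SimplexBoundary

variable {V : Finset ℕ}

/-- The translate of `w` by a constant function on `V` with minimum `0` on `V`, which is a positive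
multiple of a point of the boundary of the simplex `V` unless it vanishes; it is `0` off `V`. -/
noncomputable def shiftToBoundary (V : Finset ℕ) (hV : V.Nonempty) (w : ℕ → ℝ) : ℕ → ℝ :=
  fun u ↦ if u ∈ V then w u - V.inf' hV w else 0

theorem continuous_shiftToBoundary (hV : V.Nonempty) : Continuous (shiftToBoundary V hV) := by
  refine continuous_pi fun u ↦ ?_
  unfold shiftToBoundary
  split_ifs
  · exact (continuous_apply u).sub (Continuous.finset_inf'_apply hV fun i _ ↦ continuous_apply i)
  · exact continuous_const

theorem inf'_add_const (hV : V.Nonempty) (w : ℕ → ℝ) (c : ℝ) :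
    V.inf' hV (fun u ↦ w u + c) = V.inf' hV w + c :=
  (Finset.apply_inf'_eq_inf'_comp hV (· + c) fun a b ↦ (min_add_add_right a b c).symm).symm

theorem shiftToBoundary_congr (hV : V.Nonempty) {w w' : ℕ → ℝ} (c : ℝ)
    (h : ∀ u ∈ V, w u = w' u + c) : shiftToBoundary V hV w = shiftToBoundary V hV w' := by
  funext u
  simp only [shiftToBoundary]
  rw [Finset.inf'_congr hV rfl h, inf'_add_const]
  split_ifs with hu
  · rw [h u hu]
    ring
  · rfl

theorem shiftToBoundary_idem (hV : V.Nonempty) (w : ℕ → ℝ) :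
    shiftToBoundary V hV (shiftToBoundary V hV w) = shiftToBoundary V hV w :=
  shiftToBoundary_congr hV (-V.inf' hV w) fun u hu ↦ by
    simp [shiftToBoundary, hu, sub_eq_add_neg]

theorem shiftToBoundary_smul (hV : V.Nonempty) {c : ℝ} (hc : 0 ≤ c) (w : ℕ → ℝ) :
    shiftToBoundary V hV (c • w) = c • shiftToBoundary V hV w := by
  have : V.inf' hV (fun u ↦ c * w u) = c * V.inf' hV w :=
    (Finset.apply_inf'_eq_inf'_comp hV (c * ·) fun a b ↦ mul_min_of_nonneg a b hc).symm
  funext u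
  simp only [shiftToBoundary, Pi.smul_def, smul_eq_mul, this]
  split_ifs <;> ring

theorem shiftToBoundary_eq_self_iff (hV : V.Nonempty) {w : ℕ → ℝ} :
    shiftToBoundary V hV w = w ↔ 0 ≤ w ∧ ∃ i ∈ V, ∀ u ∉ V.erase i, w u = 0 := by
  obtain ⟨i, hi, hmin⟩ := V.exists_mem_eq_inf' hV w
  have inf'_le {u : ℕ} (hu : u ∈ V) : V.inf' hV w ≤ w u := V.inf'_le w hu
  constructor
  · intro e
    have eq_ite (u : ℕ) : w u = if u ∈ V then w u - V.inf' hV w else 0 := (congrFun e u).symm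
    refine ⟨fun u ↦ ?_, i, hi, fun u hu ↦ ?_⟩ <;> rw [eq_ite u]
    · split_ifs with hu
      · simpa using inf'_le hu
      · rfl
    · obtain rfl | hu : u = i ∨ u ∉ V := by grind
      · rw [hmin, sub_self, ite_self]
      · rw [if_neg hu]
  · rintro ⟨h0, j, hj, hw⟩
    have : V.inf' hV w = 0 := le_antisymm (hw j (V.notMem_erase j) ▸ inf'_le hj)
      (V.le_inf' hV w fun u _ ↦ h0 u)
    funext u
    simp only [shiftToBoundary, this, sub_zero]
    split_ifs with hu
    · rfl
    · exact (hw u fun hu' ↦ hu (Finset.mem_of_mem_erase hu')).symm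

theorem mem_realSpace_of_faces_eq_properFaces {K : SComplex} (hK : K.faces = properFaces V)
    (hc : 2 ≤ V.card) (hV : V.Nonempty) {w : ℕ → ℝ} :
    w ∈ K.realSpace ↔ shiftToBoundary V hV w = w ∧ ∑ u ∈ V, w u = 1 := by
  have subset {s : Finset ℕ} (hs : s ∈ K.faces) : s ⊂ V := (mem_properFaces.mp (hK ▸ hs)).1
  rw [mem_realSpace fun s hs ↦ (subset hs).1, shiftToBoundary_eq_self_iff, and_assoc]
  refine and_congr_right' (and_congr_left' ⟨fun ⟨s, hs, hw⟩ ↦ ?_, fun ⟨i, hi, hw⟩ ↦ ?_⟩)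
  · obtain ⟨i, hi, his⟩ := Finset.exists_of_ssubset (subset hs)
    have hsV : s ⊆ V.erase i := Finset.subset_erase.mpr ⟨(subset hs).1, his⟩
    exact ⟨i, hi, fun u hu ↦ hw u fun hus ↦ hu (hsV hus)⟩
  · refine ⟨V.erase i, ?_, hw⟩
    rw [hK, mem_properFaces]
    exact ⟨Finset.erase_ssubset hi, Finset.card_pos.mp (by rw [Finset.card_erase_of_mem hi]; lia)⟩

/-- The functions on `V` modulo the constants, normalized to vanish at a vertex `k`, form a
Euclidean space. -/
theorem exists_coordinates_mod_const {d k : ℕ} (hk : k ∈ V) (hc : V.card = d + 1) :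
    ∃ (f : (ℕ → ℝ) →L[ℝ] EuclideanSpace ℝ (Fin d)) (g : EuclideanSpace ℝ (Fin d) →L[ℝ] (ℕ → ℝ)),
      (∀ w, ∀ u ∈ V, g (f w) u = w u + -w k) ∧
        ∀ x w c, (∀ u ∈ V, w u = g x u + c) → f w = x := by
  let e : V.erase k ≃ Fin d := (V.erase k).equivFinOfCardEq (by
    rw [Finset.card_erase_of_mem hk, hc, Nat.add_sub_cancel])
  let proj (u : ℕ) : (ℕ → ℝ) →L[ℝ] ℝ := ContinuousLinearMap.proj u
  refine ⟨(EuclideanSpace.equiv (Fin d) ℝ).symm.toContinuousLinearMap ∘L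
      ContinuousLinearMap.pi fun i ↦ proj (e.symm i) - proj k,
    ContinuousLinearMap.pi fun u ↦
      if hu : u ∈ V.erase k then EuclideanSpace.proj (e ⟨u, hu⟩) else 0,
    fun w u hu ↦ ?_, fun x w c hw ↦ ?_⟩
  · by_cases huk : u ∈ V.erase k
    · simp [huk, proj, sub_eq_add_neg, -Finset.mem_erase]
    · obtain rfl : u = k := by grind
      simp
  · ext i
    have hi : (e.symm i : ℕ) ∈ V.erase k := (e.symm i).2
    simp [proj, hw k hk, hw _ (Finset.mem_of_mem_erase hi), hi, V.notMem_erase k,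
      -Finset.mem_erase]

theorem nonempty_homeomorph_sphere_of_faces_eq_properFaces {K : SComplex} {d : ℕ} (hd : 0 < d)
    (hK : K.faces = properFaces V) (hc : V.card = d + 1) :
    Nonempty (K.realSpace ≃ₜ Metric.sphere (0 : EuclideanSpace ℝ (Fin d)) 1) := by
  have hV : V.Nonempty := Finset.card_pos.mp (by lia)
  have ⟨k, hk⟩ := hV
  obtain ⟨f, g, hgf, hfg⟩ := exists_coordinates_mod_const hk hc
  have f_shift (x) : f (shiftToBoundary V hV (g x)) = x :=
    hfg x _ (-V.inf' hV (g x)) fun u hu ↦ by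
      simp [shiftToBoundary, hu, sub_eq_add_neg]
  refine nonempty_homeomorph_sphere_of_cone (f := f) (g := shiftToBoundary V hV ∘ g)
    (ℓ := ∑ u ∈ V, ContinuousLinearMap.proj (R := ℝ) (φ := fun _ : ℕ ↦ ℝ) u)
    ((continuous_shiftToBoundary _).comp g.continuous) (fun c hc x ↦ ?_) f_shift
    (fun x hx ↦ ?_) (fun y ↦ ?_)
  · rw [Function.comp_apply, map_smul, shiftToBoundary_smul _ hc, Function.comp_apply]
  · obtain ⟨h0, -⟩ := (shiftToBoundary_eq_self_iff hV).mp
      (shiftToBoundary_idem hV (g x))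
    simp only [Function.comp_apply, sum_apply, ContinuousLinearMap.proj_apply]
    refine (Finset.sum_nonneg fun u _ ↦ h0 u).lt_of_ne' fun hsum ↦ hx ?_
    have hzero : shiftToBoundary V hV (g x) = 0 := by
      funext u
      by_cases hu : u ∈ V
      · exact (Finset.sum_eq_zero_iff_of_nonneg fun u _ ↦ h0 u).mp hsum u hu
      · exact if_neg hu
    rw [← f_shift x, hzero, map_zero]
  · rw [mem_realSpace_of_faces_eq_properFaces hK (by lia) hV, Function.comp_apply,
      shiftToBoundary_congr hV (-y k) (hgf y)]
    simp

end SimplexBoundary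

/-! ### Stellar subdivisions -/

/-- `B` is the stellar subdivision of `A` at the set `σ` with new vertex `v`. -/
structure IsStellarSubdivision (A B : SComplex) (σ : Finset ℕ) (v : ℕ) : Prop where
  nonempty : σ.Nonempty
  notMem : v ∉ σ
  notMem_of_mem : ∀ τ ∈ A.faces, v ∉ τ
  mem_iff : ∀ τ, v ∉ τ → (τ ∈ B.faces ↔ τ ∈ A.faces ∧ ¬ σ ⊆ τ)
  insert_mem_iff : ∀ τ, v ∉ τ → (insert v τ ∈ B.faces ↔ τ ∪ σ ∈ A.faces ∧ ¬ σ ⊆ τ)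

/-- The direction from the barycenter of `σ`, counted with multiplicity `σ.card`, to `v`. -/
def starDirection (σ : Finset ℕ) (v : ℕ) : ℕ → ℝ :=
  fun u ↦ if u = v then (σ.card : ℝ) else if u ∈ σ then -1 else 0

namespace IsStellarSubdivision

variable {A B : SComplex} {σ T : Finset ℕ} {v : ℕ} {w : ℕ → ℝ}

theorem sum_starDirection (hv : v ∉ σ) (hT : insert v σ ⊆ T) :
    ∑ u ∈ T, starDirection σ v u = 0 := by
  have hσ : ∑ u ∈ σ, starDirection σ v u = -σ.card := by
    rw [Finset.sum_congr rfl fun u hu ↦ show starDirection σ v u = -1 by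
      rw [starDirection, if_neg (by rintro rfl; exact hv hu), if_pos hu]]
    simp
  rw [← Finset.sum_subset hT fun u _ hu ↦ by grind [starDirection], Finset.sum_insert hv, hσ,
    starDirection, if_pos rfl, add_neg_cancel]

theorem inf'_add_smul_starDirection (h : A.IsStellarSubdivision B σ v) (w : ℕ → ℝ) (c : ℝ) :
    σ.inf' h.nonempty (w + c • starDirection σ v) = σ.inf' h.nonempty w + -c := by
  rw [← inf'_add_const]
  refine Finset.inf'_congr _ rfl fun u hu ↦ ?_
  have : u ≠ v := by rintro rfl; exact h.notMem hu
  simp [starDirection, this, hu]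

theorem add_smul_starDirection_apply_self (w : ℕ → ℝ) (c : ℝ) :
    (w + c • starDirection σ v) v = w v + c * σ.card := by
  simp [starDirection]

theorem sum_add_smul_starDirection (h : A.IsStellarSubdivision B σ v) (hT : insert v σ ⊆ T)
    (w : ℕ → ℝ) (c : ℝ) : ∑ u ∈ T, (w + c • starDirection σ v) u = ∑ u ∈ T, w u := by
  simp only [Pi.add_apply, Pi.smul_apply, Finset.sum_add_distrib, ← Finset.smul_sum,
    sum_starDirection h.notMem hT, smul_zero, add_zero]

theorem exists_vertex_bound (A B : SComplex) (σ : Finset ℕ) (v : ℕ) :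
    ∃ T, insert v σ ⊆ T ∧ (∀ s ∈ A.faces, s ⊆ T) ∧ ∀ s ∈ B.faces, s ⊆ T :=
  ⟨insert v σ ∪ (A.vertexSet ∪ B.vertexSet), Finset.subset_union_left,
    fun _ hs ↦ (Finset.le_sup (f := id) hs).trans (by grind [vertexSet]),
    fun _ hs ↦ (Finset.le_sup (f := id) hs).trans (by grind [vertexSet])⟩

theorem subdivide_mem (h : A.IsStellarSubdivision B σ v) (hw : w ∈ A.realSpace) :
    w + σ.inf' h.nonempty w • starDirection σ v ∈ B.realSpace ∧ w v = 0 := by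
  obtain ⟨T, hT, hA, hB⟩ := exists_vertex_bound A B σ v
  obtain ⟨h0, ⟨τ, hτ, hsupp⟩, h1⟩ := (mem_realSpace hA).mp hw
  have hvτ := h.notMem_of_mem τ hτ
  have hle : ∀ u ∈ σ, σ.inf' h.nonempty w ≤ w u := fun u hu ↦ Finset.inf'_le w hu
  have hpos : 0 ≤ σ.inf' h.nonempty w := Finset.le_inf' _ _ fun u _ ↦ h0 u
  obtain ⟨i, hi, hmin⟩ := Finset.exists_mem_eq_inf' h.nonempty w
  refine ⟨(mem_realSpace hB).mpr ⟨fun u ↦ ?_, ?_, ?_⟩, hsupp v hvτ⟩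
  · have hu := h0 u
    simp only [Pi.zero_apply, Pi.add_apply, Pi.smul_apply, smul_eq_mul, starDirection] at hu ⊢
    split_ifs with huv huσ
    · positivity
    · linarith [hle u huσ]
    · simpa using hu
  · by_cases hστ : σ ⊆ τ
    · have hunion : τ.erase i ∪ σ = τ := by grind
      refine ⟨insert v (τ.erase i), (h.insert_mem_iff _ (by grind)).mpr
        ⟨hunion.symm ▸ hτ, fun hsub ↦ τ.notMem_erase i (hsub hi)⟩, fun u hu ↦ ?_⟩
      obtain rfl | hui := eq_or_ne u i
      · simp [starDirection, hmin, hi, show u ≠ v by grind]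
      · have huτ : u ∉ τ := by grind
        simp [starDirection, hsupp u huτ, show u ≠ v by grind, show u ∉ σ by grind]
    · obtain ⟨j, hjσ, hjτ⟩ := Finset.not_subset.mp hστ
      have hzero : σ.inf' h.nonempty w = 0 := le_antisymm (hsupp j hjτ ▸ hle j hjσ) hpos
      exact ⟨τ, (h.mem_iff τ hvτ).mpr ⟨hτ, hστ⟩, by simpa [hzero] using hsupp⟩
  · rw [h.sum_add_smul_starDirection hT, h1]

theorem unsubdivide_mem (h : A.IsStellarSubdivision B σ v) (hw : w ∈ B.realSpace) :
    w + -(w v / σ.card) • starDirection σ v ∈ A.realSpace ∧ σ.inf' h.nonempty w = 0 := by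
  obtain ⟨T, hT, hA, hB⟩ := exists_vertex_bound A B σ v
  obtain ⟨h0, ⟨τ, hτ, hsupp⟩, h1⟩ := (mem_realSpace hB).mp hw
  have hcard : (σ.card : ℝ) ≠ 0 := by simpa using h.nonempty.ne_empty
  obtain ⟨hcarrier, hστ⟩ : τ.erase v ∪ (if v ∈ τ then σ else ∅) ∈ A.faces ∧ ¬ σ ⊆ τ.erase v := by
    split_ifs with hvτ
    · exact (h.insert_mem_iff _ (τ.notMem_erase v)).mp ((Finset.insert_erase hvτ).symm ▸ hτ)
    · simpa [Finset.erase_eq_of_notMem hvτ] using (h.mem_iff τ hvτ).mp hτ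
  refine ⟨(mem_realSpace hA).mpr ⟨fun u ↦ ?_, ⟨_, hcarrier, fun u hu ↦ ?_⟩, ?_⟩, ?_⟩
  · have hu := h0 u
    have hv := h0 v
    simp only [Pi.zero_apply, Pi.add_apply, Pi.smul_apply, smul_eq_mul, starDirection] at hu hv ⊢
    split_ifs with huv huσ
    · rw [huv, neg_mul, div_mul_cancel₀ _ hcard, add_neg_cancel]
    · rw [neg_mul_neg, mul_one]
      positivity
    · simpa using hu
  · obtain rfl | huv := eq_or_ne u v
    · simp [starDirection, hcard]
    · have hwu : w u = 0 := hsupp u (by grind)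
      by_cases huσ : u ∈ σ
      · have hvτ : v ∉ τ := by grind
        simp [hwu, hsupp v hvτ]
      · simp [starDirection, hwu, huv, huσ]
  · rw [h.sum_add_smul_starDirection hT, h1]
  · obtain ⟨j, hjσ, hjτ⟩ := Finset.not_subset.mp hστ
    have hwj : w j = 0 := hsupp j (by grind [h.notMem])
    exact le_antisymm (hwj ▸ Finset.inf'_le w hjσ) (Finset.le_inf' _ _ fun u _ ↦ h0 u)

theorem nonempty_homeomorph (h : A.IsStellarSubdivision B σ v) :
    Nonempty (A.realSpace ≃ₜ B.realSpace) := by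
  have hcard : (σ.card : ℝ) ≠ 0 := by simpa using h.nonempty.ne_empty
  have hinf : Continuous fun w : ℕ → ℝ ↦ σ.inf' h.nonempty w :=
    .finset_inf'_apply h.nonempty fun i _ ↦ continuous_apply i
  have hdiv : Continuous fun w : ℕ → ℝ ↦ w v / σ.card := (continuous_apply v).div_const _
  refine ⟨{
    toFun := fun w ↦ ⟨_, (h.subdivide_mem w.2).1⟩
    invFun := fun w ↦ ⟨_, (h.unsubdivide_mem w.2).1⟩
    left_inv := fun w ↦ Subtype.ext ?_
    right_inv := fun w ↦ Subtype.ext ?_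
    continuous_toFun := ?_
    continuous_invFun := ?_ }⟩
  · simp only [add_smul_starDirection_apply_self, (h.subdivide_mem w.2).2]
    rw [zero_add, mul_div_cancel_right₀ _ hcard, neg_smul, add_neg_cancel_right]
  · simp only [h.inf'_add_smul_starDirection, (h.unsubdivide_mem w.2).2]
    rw [zero_add, neg_neg, neg_smul, neg_add_cancel_right]
  · exact ((continuous_id.add (hinf.smul continuous_const)).comp
      continuous_subtype_val).subtype_mk _
  · exact ((continuous_id.add (hdiv.neg.smul continuous_const)).comp
      continuous_subtype_val).subtype_mk _

end IsStellarSubdivision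

/-- `K` is a stellar subdivision at `σ` with new vertex `v`, expressed inside `K`: `σ` is not a
face, and the link of `v` is a join with the boundary of the simplex `σ`. -/
structure IsSubdivisionVertex (K : SComplex) (σ : Finset ℕ) (v : ℕ) : Prop where
  mem : {v} ∈ K.faces
  notMem : v ∉ σ
  nontrivial : σ.Nontrivial
  notMem_faces : σ ∉ K.faces
  join : ∀ s, ∀ i ∈ σ, i ∉ s → insert v s ∈ K.faces → insert v (s ∪ σ.erase i) ∈ K.faces

theorem mem_mergeVertices_right {K : SComplex} {v a : ℕ} {τ : Finset ℕ} (hv : v ∉ τ) :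
    τ ∈ (K.mergeVertices v a a).faces ↔
      τ ∈ K.faces ∨ a ∈ τ ∧ insert v (τ.erase a) ∈ K.faces := by
  have image_eq (s : Finset ℕ) :
      s.image (mergeVertex v a a) = if v ∈ s then insert a (s.erase v) else s := by
    ext x
    simp only [Finset.mem_image, mergeVertex]
    grind
  simp only [mergeVertices, Finset.mem_image, image_eq]
  constructor
  · rintro ⟨s, hs, rfl⟩
    split_ifs with hvs
    · exact .inr ⟨by simp, mem_faces_of_subset hs (by grind) (by simp)⟩
    · exact .inl hs
  · rintro (hτ | ⟨ha, hτ⟩)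
    · exact ⟨τ, hτ, if_neg hv⟩
    · exact ⟨_, hτ, by grind⟩

namespace IsSubdivisionVertex

variable {K : SComplex} {σ : Finset ℕ} {v a : ℕ}

theorem not_subset (h : K.IsSubdivisionVertex σ v) {s : Finset ℕ} (hs : s ∈ K.faces) : ¬ σ ⊆ s :=
  fun hσ ↦ h.notMem_faces (mem_faces_of_subset hs hσ h.nontrivial.nonempty)

theorem edge (h : K.IsSubdivisionVertex σ v) (ha : a ∈ σ) : {v, a} ∈ K.faces := by
  obtain ⟨i, hi, hia⟩ := h.nontrivial.exists_ne a
  exact mem_faces_of_subset (h.join ∅ i hi (by simp) h.mem) (by grind) (by simp)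

theorem linkCondition (h : K.IsSubdivisionVertex σ v) (ha : a ∈ σ) {γ : Finset ℕ}
    (hv : insert v γ ∈ K.faces) (haγ : insert a γ ∈ K.faces) :
    insert v (insert a γ) ∈ K.faces := by
  obtain ⟨i, hi, hiγ⟩ := Finset.not_subset.mp (h.not_subset haγ)
  exact mem_faces_of_subset (h.join γ i hi (by grind) hv) (by grind) (by simp)

theorem isContractible (h : K.IsSubdivisionVertex σ v) {d w : ℕ} (hK : K.IsLinkNormal d)
    (ha : a ∈ σ) (hw : ∀ s ∈ K.faces, w ∉ s) : K.IsContractible d v a w where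
  isLinkNormal := hK
  ne := by rintro rfl; exact h.notMem ha
  fresh := hw
  edge := h.edge ha
  linkCondition _ _ _ := h.linkCondition ha

theorem isStellarSubdivision (h : K.IsSubdivisionVertex σ v) (ha : a ∈ σ) :
    (K.mergeVertices v a a).IsStellarSubdivision K σ v := by
  have hva : v ≠ a := by rintro rfl; exact h.notMem ha
  refine ⟨h.nontrivial.nonempty, h.notMem, fun τ hτ ↦ ?_, fun τ hv ↦ ?_, fun τ hv ↦ ?_⟩
  · obtain ⟨s, -, rfl⟩ := Finset.mem_image.mp hτ
    simp [mem_image_mergeVertex hva]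
  · rw [mem_mergeVertices_right hv]
    refine ⟨fun hτ ↦ ⟨.inl hτ, h.not_subset hτ⟩, ?_⟩
    rintro ⟨hτ | ⟨haτ, hτ⟩, hστ⟩
    · exact hτ
    · obtain ⟨i, hi, hiτ⟩ := Finset.not_subset.mp hστ
      exact mem_faces_of_subset (h.join _ i hi (by grind) hτ) (by grind) ⟨a, haτ⟩
  · rw [mem_mergeVertices_right (by grind [h.notMem])]
    constructor
    · intro hτ
      have hτa : insert v (τ.erase a) ∈ K.faces := mem_faces_of_subset hτ (by grind) (by simp)
      have hunion := h.join _ a ha (by simp) hτa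
      exact ⟨.inr ⟨by grind, mem_faces_of_subset hunion (by grind) (by simp)⟩,
        fun hστ ↦ h.not_subset hτ (by grind)⟩
    · rintro ⟨hτ | ⟨-, hτ⟩, hστ⟩
      · exact (h.not_subset hτ Finset.subset_union_right).elim
      · obtain ⟨i, hi, hiτ⟩ := Finset.not_subset.mp hστ
        have hτi : insert v (((τ ∪ σ).erase a).erase i) ∈ K.faces :=
          mem_faces_of_subset hτ (by grind) (by simp)
        by_cases haτ : a ∈ τ
        · exact mem_faces_of_subset (h.join _ i hi (by simp) hτi) (by grind) (by simp)
        · exact mem_faces_of_subset hτ (by grind) (by simp)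

theorem nonempty_homeomorph_mergeVertices (h : K.IsSubdivisionVertex σ v) (ha : a ∈ σ) {w : ℕ}
    (hw : ∀ s ∈ K.faces, w ∉ s) :
    Nonempty (K.realSpace ≃ₜ (K.mergeVertices v a w).realSpace) := by
  obtain ⟨e⟩ := (h.isStellarSubdivision ha).nonempty_homeomorph
  obtain ⟨e'⟩ := nonempty_homeomorph_of_relabel (K := K.mergeVertices v a a)
    (K' := K.mergeVertices v a w) (Equiv.swap a w) <| by
      rw [mergeVertices, mergeVertices, Finset.image_image]
      refine Finset.image_congr fun s hs ↦ ?_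
      rw [Function.comp_apply, Finset.image_image]
      refine Finset.image_congr fun x hx ↦ ?_
      have hxw : x ≠ w := by rintro rfl; exact hw s hs hx
      simp only [Function.comp_apply, mergeVertex]
      grind
  exact ⟨e.symm.trans e'⟩

end IsSubdivisionVertex

/-! ### Surfaces with few vertices -/

section Surface

variable {K : SComplex}

theorem IsLinkNormal.deg_eq_two {d : ℕ} (h : K.IsLinkNormal d) {s : Finset ℕ} (hs : s ∈ K.faces)
    (hc : s.card = d) : K.deg s = 2 := by
  obtain ⟨x, y, hxy, hz⟩ := h.exists_opposite s hs hc
  rw [deg, fnum_zero, ← Finset.card_pair hxy]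
  congr 1
  ext z
  rw [mem_vertexSet, hz, Finset.mem_insert, Finset.mem_singleton]

theorem sum_indicator_of_card_eq_three {C : Finset ℕ} (hC : C.card = 3)
    (hK : ∀ x ∈ C, ∀ y ∈ C, K.VertAdj x y) (p : ℕ) :
    ∑ e ∈ K.simplices 1 with p ∈ e, (if e ⊆ C then (1 : ZMod 2) else 0) = 0 := by
  rw [← Finset.sum_filter, Finset.filter_filter]
  by_cases hp : p ∈ C
  · obtain ⟨q, r, hqr, hqrC⟩ : ∃ q r, q ≠ r ∧ C.erase p = {q, r} :=
      Finset.card_eq_two.mp (by rw [Finset.card_erase_of_mem hp, hC])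
    have mem_C (x : ℕ) : x ≠ p ∧ x ∈ C ↔ x = q ∨ x = r := by simpa using Finset.ext_iff.mp hqrC x
    have edges : {e ∈ K.simplices 1 | p ∈ e ∧ e ⊆ C} = {{p, q}, {p, r}} := by
      ext e
      simp only [Finset.mem_filter, mem_simplices, Finset.mem_insert, Finset.mem_singleton]
      constructor
      · rintro ⟨⟨-, hc⟩, hpe, heC⟩
        obtain ⟨z, hz, rfl⟩ : ∃ z ∉ ({p} : Finset ℕ), insert z {p} = e :=
          exists_insert_of_subset (by simpa) (by simpa)
        have hzqr := (mem_C z).mp (by grind)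
        grind
      · rintro (rfl | rfl)
        · exact ⟨⟨hK p hp q (by grind), Finset.card_pair (by grind)⟩, by simp, by grind⟩
        · exact ⟨⟨hK p hp r (by grind), Finset.card_pair (by grind)⟩, by simp, by grind⟩
    have hne : ({p, q} : Finset ℕ) ≠ {p, r} := fun e ↦ by
      have hq : q ∈ ({p, r} : Finset ℕ) := e ▸ by simp
      grind
    rw [edges, Finset.sum_pair hne]
    exact CharTwo.add_self_eq_zero 1
  · rw [Finset.filter_false_of_mem fun e _ he ↦ hp (he.2 he.1), Finset.sum_empty]

/-- In a sphere the `3`-cycle `C` separates the two sides of each of its edges: being a cycle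
modulo two, it bounds, and the coloring of the triangles by a bounding chain changes exactly
across `C`. -/
theorem IsLinkNormal.not_vertAdj_of_mem_lk (h : K.IsLinkNormal 2) (hχ : 2 ≤ K.euler)
    {C e : Finset ℕ} {b d : ℕ} (hC : C.card = 3) (hK : ∀ x ∈ C, ∀ y ∈ C, K.VertAdj x y)
    (heC : e ⊆ C) (hec : e.card = 2) (hbd : b ≠ d) (hb : b ∉ C) (hd : d ∉ C)
    (hbe : insert b e ∈ K.faces) (hde : insert d e ∈ K.faces) : ¬ K.VertAdj b d := by
  intro hadj
  obtain ⟨x, hx⟩ := h.exists_coloring_of_cycle hχ fun p _ ↦ sum_indicator_of_card_eq_three hC hK p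
  have color_eq {p : ℕ} {F G : Finset ℕ} (hp : p ∉ C) (hF : K.IsFacet F) (hG : K.IsFacet G)
      (hpF : p ∈ F) (hpG : p ∈ G) : x F = x G := by
    have path := h.reflTransGen_starAdj {p} hF hG (by simpa) (by simpa)
    clear hpG
    induction path with
    | refl => rfl
    | tail _ hAB ih =>
      obtain ⟨hadj, hpA, hpB⟩ := hAB
      rw [Finset.singleton_subset_iff] at hpA hpB
      rw [ih hadj.1, ← CharTwo.add_eq_zero, hx _ _ hadj,
        if_neg fun hC ↦ hp (hC (Finset.mem_inter.mpr ⟨hpA, hpB⟩))]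
  have hbF : K.IsFacet (insert b e) :=
    h.isFacet_iff.mpr ⟨hbe, by rw [Finset.card_insert_of_notMem fun hbe ↦ hb (heC hbe), hec]⟩
  have hdF : K.IsFacet (insert d e) :=
    h.isFacet_iff.mpr ⟨hde, by rw [Finset.card_insert_of_notMem fun hde ↦ hd (heC hde), hec]⟩
  have hinter : insert b e ∩ insert d e = e := by grind
  have hadjF : K.FacetAdj (insert b e) (insert d e) :=
    ⟨hbF, hdF, by rw [hinter, hec, (h.isFacet_iff.mp hbF).2]⟩
  obtain ⟨T, hT, hbdT⟩ := h.exists_facet hadj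
  have hcolor : x (insert b e) = x (insert d e) :=
    (color_eq hb hbF hT (by simp) (hbdT (by simp))).trans
      (color_eq hd hT hdF (hbdT (by simp)) (by simp))
  have := hx _ _ hadjF
  rw [hcolor, CharTwo.add_self_eq_zero, hinter, if_pos heC] at this
  exact zero_ne_one this

theorem IsLinkNormal.three_mul_euler (h : K.IsLinkNormal 2) :
    3 * K.euler = 3 * K.fnum 0 - K.fnum 1 := by
  have := h.mul_fnum_succ
  rw [euler]
  lia

theorem IsLinkNormal.exists_deg_le_four (h : K.IsLinkNormal 2) (hχ : 2 ≤ K.euler)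
    (hn : K.vertexSet.card ≤ 11) : ∃ v, {v} ∈ K.faces ∧ K.deg {v} ≤ 4 := by
  by_contra! hdeg
  have hsum : K.vertexSet.card * 5 ≤ 2 * K.fnum 1 := by
    rw [← K.sum_deg]
    exact Finset.card_nsmul_le_sum _ _ 5 fun v hv ↦ hdeg v (mem_vertexSet.mp hv)
  have := h.three_mul_euler
  rw [fnum_zero] at this
  lia

theorem vertexSet_lk_subset_erase (K : SComplex) (v : ℕ) :
    (K.lk {v}).vertexSet ⊆ K.vertexSet.erase v := by
  intro x hx
  rw [mem_vertexSet, singleton_mem_lk] at hx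
  rw [Finset.mem_erase, mem_vertexSet]
  exact ⟨by simpa using hx.1, mem_faces_of_subset hx.2 (by simp) (by simp)⟩

theorem deg_singleton_lt {v : ℕ} (hv : {v} ∈ K.faces) : K.deg {v} < K.vertexSet.card := by
  rw [deg, fnum_zero, ← Finset.card_erase_add_one (mem_vertexSet.mpr hv)]
  exact Nat.lt_succ_of_le (Finset.card_le_card (K.vertexSet_lk_subset_erase v))

theorem IsLinkNormal.two_le_euler (h : K.IsLinkNormal 2) (hn : K.vertexSet.card ≤ 7)
    (hdeg : 5 ≤ K.vertexSet.card → ∀ v, {v} ∈ K.faces → K.deg {v} + 2 ≤ K.vertexSet.card) :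
    2 ≤ K.euler := by
  have hge : 3 ≤ K.vertexSet.card := by
    obtain ⟨s, hs⟩ := h.nonempty
    obtain ⟨F, hF, -, hc⟩ := h.exists_superset s hs
    exact hc.ge.trans (Finset.card_le_card (Finset.le_sup (f := id) hF))
  have sum_le {m : ℕ} (hm : ∀ v, {v} ∈ K.faces → K.deg {v} ≤ m) :
      2 * K.fnum 1 ≤ K.vertexSet.card * m := by
    rw [← K.sum_deg]
    exact Finset.sum_le_card_nsmul _ _ _ fun v hv ↦ hm v (mem_vertexSet.mp hv)
  have hlt := sum_le fun v hv ↦ Nat.le_sub_one_of_lt (deg_singleton_lt hv)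
  have hle := fun h5 ↦ sum_le fun v hv ↦ Nat.le_sub_of_add_le (hdeg h5 v hv)
  have hface := h.mul_fnum_succ
  have hχ := h.three_mul_euler
  rw [fnum_zero] at hχ
  generalize K.vertexSet.card = n at *
  interval_cases n <;> lia

theorem properFaces_subset_iff {V : Finset ℕ} (hV : V.Nontrivial) :
    properFaces V ⊆ K.faces ↔ ∀ x ∈ V, V.erase x ∈ K.faces := by
  refine ⟨fun h x hx ↦ h (mem_properFaces.mpr
    ⟨Finset.erase_ssubset hx, hV.erase_nonempty⟩), fun h s hs ↦ ?_⟩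
  obtain ⟨hsV, hs⟩ := mem_properFaces.mp hs
  obtain ⟨x, hxV, hxs⟩ := Finset.exists_of_ssubset hsV
  exact mem_faces_of_subset (h x hxV) (Finset.subset_erase.mpr ⟨hsV.subset, hxs⟩) hs

end Surface

section LowDegree

variable {K : SComplex} {v : ℕ}

theorem mem_vertexSet_lk_singleton {x p : ℕ} :
    x ∈ (K.lk {p}).vertexSet ↔ x ≠ p ∧ K.VertAdj x p := by
  rw [mem_vertexSet, singleton_mem_lk, Finset.mem_singleton, VertAdj]

theorem vertAdj_lk_singleton {x y : ℕ} :
    (K.lk {v}).VertAdj x y ↔ x ≠ v ∧ y ≠ v ∧ {v, x, y} ∈ K.faces := by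
  rw [vertAdj_lk, Finset.mem_singleton, Finset.mem_singleton, Finset.pair_comm y,
    Finset.insert_comm]

theorem subset_insert_vertexSet_lk {s : Finset ℕ} (hs : insert v s ∈ K.faces) :
    s ⊆ insert v (K.lk {v}).vertexSet := by
  intro x hx
  rw [Finset.mem_insert, mem_vertexSet_lk_singleton, or_iff_not_imp_left]
  exact fun hxv ↦ ⟨hxv, mem_faces_of_subset hs (by grind) (by simp)⟩

theorem IsLinkNormal.card_vertexSet_lk (h : K.IsLinkNormal 1) {p : ℕ} (hp : p ∈ K.vertexSet) :
    (K.lk {p}).vertexSet.card = 2 := by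
  rw [← fnum_zero]
  exact h.deg_eq_two (mem_vertexSet.mp hp) (Finset.card_singleton p)

theorem IsLinkNormal.card_vertexSet_eq_three_or_four (h : K.IsLinkNormal 1)
    (hn : K.vertexSet.card ≤ 4) : K.vertexSet.card = 3 ∨ K.vertexSet.card = 4 := by
  obtain ⟨a, ha⟩ := h.exists_mem_lk (.inl rfl) zero_le_one
  have ha : a ∈ K.vertexSet := mem_vertexSet.mpr (by simpa using (singleton_mem_lk.mp ha).2)
  have := Finset.card_le_card (K.vertexSet_lk_subset_erase a)
  rw [h.card_vertexSet_lk ha, Finset.card_erase_of_mem ha] at this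
  lia

theorem IsLinkNormal.vertAdj_of_card_eq_three (h : K.IsLinkNormal 1) (hn : K.vertexSet.card = 3)
    {x y : ℕ} (hx : x ∈ K.vertexSet) (hy : y ∈ K.vertexSet) : K.VertAdj x y := by
  obtain rfl | hxy := eq_or_ne x y
  · simpa [VertAdj] using mem_vertexSet.mp hx
  · have hlk := Finset.eq_of_subset_of_card_le (K.vertexSet_lk_subset_erase y)
      (by rw [h.card_vertexSet_lk hy, Finset.card_erase_of_mem hy, hn])
    exact (mem_vertexSet_lk_singleton.mp (hlk ▸ Finset.mem_erase.mpr ⟨hxy, hx⟩)).2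

theorem IsLinkNormal.exists_quadrilateral (h : K.IsLinkNormal 1) (hn : K.vertexSet.card = 4) :
    ∃ a b c d, a ≠ c ∧ b ≠ d ∧ K.vertexSet = {a, b, c, d} ∧ K.VertAdj a b ∧ K.VertAdj b c ∧
      K.VertAdj c d ∧ K.VertAdj d a ∧ ¬ K.VertAdj a c ∧ ¬ K.VertAdj b d := by
  obtain ⟨a, ha⟩ : K.vertexSet.Nonempty := Finset.card_pos.mp (by lia)
  obtain ⟨b, d, hbd, hlka⟩ := Finset.card_eq_two.mp (h.card_vertexSet_lk ha)
  have hsub : {b, d} ⊆ K.vertexSet.erase a := hlka ▸ K.vertexSet_lk_subset_erase a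
  obtain ⟨c, hc⟩ : ∃ c, K.vertexSet.erase a \ {b, d} = {c} := Finset.card_eq_one.mp <| by
    rw [Finset.card_sdiff_of_subset hsub, Finset.card_erase_of_mem ha, hn, Finset.card_pair hbd]
  have hV : K.vertexSet = {a, b, c, d} := by
    rw [← Finset.insert_erase ha, ← Finset.sdiff_union_of_subset hsub, hc]
    grind
  have hcV : c ≠ a ∧ c ≠ b ∧ c ≠ d := by
    have := hc.ge (Finset.mem_singleton_self c)
    grind
  have adj_iff {p q r : ℕ} (hlk : (K.lk {p}).vertexSet = {q, r}) (x : ℕ) :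
      x ≠ p ∧ K.VertAdj x p ↔ x = q ∨ x = r := by
    rw [← mem_vertexSet_lk_singleton, hlk, Finset.mem_insert, Finset.mem_singleton]
  have hac : ¬ K.VertAdj a c := fun hac ↦ by
    have := (adj_iff hlka c).mp ⟨hcV.1, hac.symm⟩
    tauto
  have hlkc : (K.lk {c}).vertexSet = {b, d} := by
    refine Finset.eq_of_subset_of_card_le (fun x hx ↦ ?_)
      (by rw [h.card_vertexSet_lk (by simp [hV]), Finset.card_pair hbd])
    have hxV := K.vertexSet_lk_subset_erase c hx
    have hxa : x ≠ a := fun hxa ↦ hac (hxa ▸ (mem_vertexSet_lk_singleton.mp hx).2)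
    rw [hV] at hxV
    grind
  have hba := ((adj_iff hlka b).mpr (.inl rfl)).2
  have hda := ((adj_iff hlka d).mpr (.inr rfl)).2
  have hbc := ((adj_iff hlkc b).mpr (.inl rfl)).2
  have hdc := ((adj_iff hlkc d).mpr (.inr rfl)).2
  have hlkb : {a, c} = (K.lk {b}).vertexSet := by
    refine Finset.eq_of_subset_of_card_le (fun x hx ↦ ?_)
      (by rw [h.card_vertexSet_lk (by simp [hV]), Finset.card_pair hcV.1.symm])
    rw [mem_vertexSet_lk_singleton]
    grind [VertAdj.symm]
  refine ⟨a, b, c, d, hcV.1.symm, hbd, hV, hba.symm, hbc, hdc.symm, hda, hac, fun h ↦ ?_⟩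
  have := (adj_iff hlkb.symm d).mp ⟨hbd.symm, h.symm⟩
  grind

theorem IsLinkNormal.insert_erase_mem_of_card_eq_three (h : (K.lk {v}).IsLinkNormal 1)
    (hcard : (K.lk {v}).vertexSet.card = 3) {i : ℕ} (hi : i ∈ (K.lk {v}).vertexSet) :
    insert v ((K.lk {v}).vertexSet.erase i) ∈ K.faces := by
  obtain ⟨x, y, -, hxy⟩ := Finset.card_eq_two.mp <|
    (Finset.card_erase_of_mem hi).trans (Nat.sub_eq_of_eq_add hcard)
  have mem_lk_of_mem {z : ℕ} (hz : z ∈ ({x, y} : Finset ℕ)) : z ∈ (K.lk {v}).vertexSet :=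
    Finset.mem_of_mem_erase (hxy ▸ hz)
  rw [hxy]
  exact (vertAdj_lk_singleton.mp (h.vertAdj_of_card_eq_three hcard (mem_lk_of_mem (by simp))
    (mem_lk_of_mem (by simp)))).2.2

theorem isSubdivisionVertex_of_triangle (hv : {v} ∈ K.faces)
    (hlk : ∀ i ∈ (K.lk {v}).vertexSet, insert v ((K.lk {v}).vertexSet.erase i) ∈ K.faces)
    (hcard : (K.lk {v}).vertexSet.card = 3) (hK : (K.lk {v}).vertexSet ∉ K.faces) :
    K.IsSubdivisionVertex (K.lk {v}).vertexSet v where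
  mem := hv
  notMem hv := (mem_vertexSet_lk_singleton.mp hv).1 rfl
  nontrivial := Finset.one_lt_card_iff_nontrivial.mp (by lia)
  notMem_faces := hK
  join s i hi his hs := by
    have hsub := subset_insert_vertexSet_lk hs
    exact mem_faces_of_subset (hlk i hi) (by grind) (by simp)

theorem isSubdivisionVertex_of_quadrilateral {a b c d : ℕ} (hac : a ≠ c) (hacK : ¬ K.VertAdj a c)
    (hlk : (K.lk {v}).vertexSet = {a, b, c, d}) (hab : (K.lk {v}).VertAdj a b)
    (hbc : (K.lk {v}).VertAdj b c) (hcd : (K.lk {v}).VertAdj c d)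
    (hda : (K.lk {v}).VertAdj d a) (hbd : ¬ (K.lk {v}).VertAdj b d) :
    K.IsSubdivisionVertex {a, c} v := by
  rw [vertAdj_lk_singleton] at hab hbc hcd hda hbd
  refine ⟨mem_faces_of_subset hab.2.2 (by simp) (by simp), by grind,
    Finset.one_lt_card_iff_nontrivial.mp (by simp [hac]), hacK, fun s i hi his hs ↦ ?_⟩
  obtain ⟨o, hao, hoc, hso⟩ : ∃ o, {v, a, o} ∈ K.faces ∧ {v, o, c} ∈ K.faces ∧
      ∀ x ∈ s, x = v ∨ x = a ∨ x = o ∨ x = c := by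
    have hsub : ∀ x ∈ s, x = v ∨ x = a ∨ x = b ∨ x = c ∨ x = d := fun x hx ↦ by
      simpa [hlk] using subset_insert_vertexSet_lk hs hx
    by_cases hb : b ∈ s
    · have hd : d ∉ s := fun hd ↦ hbd ⟨hab.2.1, hcd.2.1,
        mem_faces_of_subset hs (by simp [Finset.insert_subset_iff, hb, hd]) (by simp)⟩
      exact ⟨b, hab.2.2, hbc.2.2, fun x hx ↦ by have := hsub x hx; clear hbd; grind⟩
    · exact ⟨d, Finset.pair_comm d a ▸ hda.2.2, Finset.pair_comm c d ▸ hcd.2.2,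
        fun x hx ↦ by have := hsub x hx; clear hbd; grind⟩
  clear hab hbc hcd hda hbd hlk
  obtain rfl | rfl : i = a ∨ i = c := by simpa using hi
  · exact mem_faces_of_subset hoc (by grind) (by simp)
  · exact mem_faces_of_subset hao (by grind) (by simp)

/-- The triangle `vac` separates `b` from `d`. -/
theorem IsLinkNormal.not_vertAdj_of_quadrilateral (h : K.IsLinkNormal 2) (hχ : 2 ≤ K.euler)
    {a b c d : ℕ} (hac : a ≠ c) (hbd : b ≠ d) (hab : (K.lk {v}).VertAdj a b)
    (hbc : (K.lk {v}).VertAdj b c) (hcd : (K.lk {v}).VertAdj c d) (hda : (K.lk {v}).VertAdj d a)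
    (hacK : K.VertAdj a c) (hac' : ¬ (K.lk {v}).VertAdj a c) : ¬ K.VertAdj b d := by
  rw [vertAdj_lk_singleton] at hab hbc hcd hda hac'
  have vertAdj_of_mem {x y z p q : ℕ} (hxyz : {x, y, z} ∈ K.faces)
      (hpq : {p, q} ⊆ ({x, y, z} : Finset ℕ)) : K.VertAdj p q :=
    mem_faces_of_subset hxyz hpq (by simp)
  refine h.not_vertAdj_of_mem_lk hχ (C := {v, a, c}) (e := {v, c})
    (Finset.card_eq_three.mpr ⟨v, a, c, hab.1.symm, hcd.1.symm, hac, rfl⟩) ?_ (by grind)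
    (Finset.card_pair hcd.1.symm) hbd ?_ ?_ (Finset.insert_comm v b {c} ▸ hbc.2.2)
    (by rw [Finset.insert_comm, Finset.pair_comm]; exact hcd.2.2)
  · rintro x hx y hy
    by_cases hxy : {x, y} ⊆ ({v, a, b} : Finset ℕ)
    · exact vertAdj_of_mem hab.2.2 hxy
    by_cases hxy' : {x, y} ⊆ ({v, c, d} : Finset ℕ)
    · exact vertAdj_of_mem hcd.2.2 hxy'
    · obtain ⟨rfl, rfl⟩ | ⟨rfl, rfl⟩ : (x = a ∧ y = c) ∨ (x = c ∧ y = a) := by grind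
      · exact hacK
      · exact hacK.symm
  · intro hb
    obtain rfl | rfl : b = a ∨ b = c := by simpa [hab.2.1] using hb
    · exact hac' ⟨hab.1, hcd.1, hbc.2.2⟩
    · exact hac' ⟨hab.1, hcd.1, hab.2.2⟩
  · intro hd
    obtain rfl | rfl : d = a ∨ d = c := by simpa [hcd.2.1] using hd
    · exact hac' ⟨hab.1, hcd.1, Finset.pair_comm c d ▸ hcd.2.2⟩
    · exact hac' ⟨hab.1, hcd.1, Finset.pair_comm d a ▸ hda.2.2⟩

/-- If the link of `v` is a quadrilateral then one of its diagonals is missing, because the edge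
of the other diagonal separates its end points. -/
theorem IsLinkNormal.exists_isSubdivisionVertex (h : K.IsLinkNormal 2) (hχ : 2 ≤ K.euler)
    (hv : {v} ∈ K.faces) (hdeg : K.deg {v} ≤ 4)
    (hK : ∀ V : Finset ℕ, V.card = 4 → ¬ properFaces V ⊆ K.faces) :
    ∃ σ, K.IsSubdivisionVertex σ v := by
  have hlk : (K.lk {v}).IsLinkNormal 1 := IsLinkNormal.lk (d := 1) h hv
  rw [deg, fnum_zero] at hdeg
  obtain hcard | hcard := hlk.card_vertexSet_eq_three_or_four hdeg
  · have hW {i : ℕ} (hi : i ∈ (K.lk {v}).vertexSet) :=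
      hlk.insert_erase_mem_of_card_eq_three hcard hi
    have hvW : v ∉ (K.lk {v}).vertexSet := fun hv ↦ (mem_vertexSet_lk_singleton.mp hv).1 rfl
    refine ⟨_, isSubdivisionVertex_of_triangle hv (fun i ↦ hW) hcard fun hσ ↦
      hK (insert v (K.lk {v}).vertexSet) (by rw [Finset.card_insert_of_notMem hvW, hcard]) <|
        (properFaces_subset_iff (Finset.one_lt_card_iff_nontrivial.mp
          (by rw [Finset.card_insert_of_notMem hvW]; lia))).mpr fun x hx ↦ ?_⟩
    obtain rfl | hx := Finset.mem_insert.mp hx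
    · rwa [Finset.erase_insert hvW]
    · rw [Finset.erase_insert_of_ne fun hvx : v = x ↦ hvW (hvx ▸ hx)]
      exact hW hx
  · obtain ⟨a, b, c, d, hac, hbd, hV, hab, hbc, hcd, hda, hac', hbd'⟩ :=
      hlk.exists_quadrilateral hcard
    by_cases hacK : K.VertAdj a c
    · have hbdK := h.not_vertAdj_of_quadrilateral hχ hac hbd hab hbc hcd hda hacK hac'
      refine ⟨_, isSubdivisionVertex_of_quadrilateral hbd hbdK (hV.trans ?_) hbc hcd hda hab
        fun hca ↦ hac' hca.symm⟩
      grind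
    · exact ⟨_, isSubdivisionVertex_of_quadrilateral hac hacK hV hab hbc hcd hda hbd'⟩

end LowDegree

section Sphere

variable {K : SComplex}

theorem exists_fresh (K : SComplex) : ∃ w, ∀ s ∈ K.faces, w ∉ s := by
  obtain ⟨w, hw⟩ := Infinite.exists_notMem_finset K.vertexSet
  exact ⟨w, fun s hs hws ↦ hw (Finset.le_sup (f := id) hs hws)⟩

/-- A vertex of degree at most four is the centre of a stellar subdivision, so contracting one of
its edges yields a homeomorphic surface with fewer edges, until the boundary of a tetrahedron is
left. -/
theorem IsLinkNormal.nonempty_homeomorph_sphere (h : K.IsLinkNormal 2) (hχ : 2 ≤ K.euler)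
    (hn : K.vertexSet.card ≤ 11) :
    Nonempty (K.realSpace ≃ₜ Metric.sphere (0 : EuclideanSpace ℝ (Fin 3)) 1) := by
  induction hf : K.fnum 1 using Nat.strong_induction_on generalizing K with
  | _ m ih =>
    by_cases hV : ∃ V : Finset ℕ, V.card = 4 ∧ properFaces V ⊆ K.faces
    · obtain ⟨V, hc, hV⟩ := hV
      exact nonempty_homeomorph_sphere_of_faces_eq_properFaces three_pos
        (h.faces_eq_properFaces two_pos hV hc) hc
    · push Not at hV
      obtain ⟨v, hv, hdeg⟩ := h.exists_deg_le_four hχ hn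
      obtain ⟨σ, hσ⟩ := h.exists_isSubdivisionVertex hχ hv hdeg hV
      obtain ⟨a, ha⟩ := hσ.nontrivial.nonempty
      obtain ⟨w, hw⟩ := K.exists_fresh
      have hcontr := hσ.isContractible h ha hw
      have hdeg_edge : K.deg {v, a} = 2 := h.deg_eq_two hcontr.edge (Finset.card_pair hcontr.ne)
      have hf₁ := hcontr.fnum_one_mergeVertices_add_deg_lt
      have hf₀ := hcontr.fnum_zero_le
      have h' := hcontr.isLinkNormal_mergeVertices
      have hχ' : 2 ≤ (K.mergeVertices v a w).euler := by
        have := h.three_mul_euler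
        have := h'.three_mul_euler
        lia
      have hn' : (K.mergeVertices v a w).vertexSet.card ≤ 11 := by
        rw [vertexSet_mergeVertices]
        exact Finset.card_image_le.trans hn
      obtain ⟨f⟩ := hσ.nonempty_homeomorph_mergeVertices ha hw
      obtain ⟨g⟩ := ih _ (by lia) h' hχ' hn' rfl
      exact ⟨f.trans g⟩

end Sphere

/-! ### Edges at a vertex of small degree -/

section Contraction

variable {K : SComplex} {t v : ℕ}

theorem IsLinkNormal.deg_le_of_properFaces_subset {d : ℕ} (h : K.IsLinkNormal d) (hd : 0 < d)
    {V : Finset ℕ} (hV : properFaces V ⊆ K.faces) (hc : V.card = d + 2) (ht : {t} ∈ K.faces) :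
    K.deg {t} ≤ d + 1 := by
  have hK := h.faces_eq_properFaces hd hV hc
  have hsub : K.vertexSet ⊆ V :=
    Finset.sup_le fun s hs ↦ (mem_properFaces.mp (hK ▸ hs)).1.subset
  exact Nat.le_of_lt_succ <|
    ((deg_singleton_lt ht).trans_le (Finset.card_le_card hsub)).trans_eq hc

/-- A violation of the link condition of minimal dimension is a missing face `{t, v} ∪ γ`. It has
at least four vertices since `tv` and the triangles on it are faces, not four since there is no
missing tetrahedron, and if it had five then `K` would be the boundary of a `4`-simplex. -/
theorem IsLinkNormal.isContractible_of_dominating (h : K.IsLinkNormal 3)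
    (htet : ∀ s : Finset ℕ, s.card = 4 → properFaces s ⊆ K.faces → s ∈ K.faces)
    (hdeg : 5 ≤ K.deg {t}) (hv : v ∈ (K.lk {t}).vertexSet)
    (hdom : ∀ x ∈ (K.lk {t}).vertexSet, x ≠ v → (K.lk {t}).VertAdj x v) {w : ℕ}
    (hw : ∀ s ∈ K.faces, w ∉ s) : K.IsContractible 3 t v w := by
  obtain ⟨hvt, htv⟩ := mem_vertexSet_lk_singleton.mp hv
  refine ⟨h, hvt.symm, hw, htv.symm, fun γ ↦ ?_⟩
  induction γ using Finset.strongInduction with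
  | H γ ih =>
    intro htγ hvγ htK hvK
    have hc : (insert t (insert v γ)).card = γ.card + 2 := by
      rw [Finset.card_insert_of_notMem (by grind), Finset.card_insert_of_notMem hvγ]
    have hproper : properFaces (insert t (insert v γ)) ⊆ K.faces := by
      refine (properFaces_subset_iff (Finset.one_lt_card_iff_nontrivial.mp (by lia))).mpr
        fun x hx ↦ ?_
      obtain rfl | hxt := eq_or_ne t x
      · rwa [Finset.erase_insert (by grind)]
      obtain rfl | hxv := eq_or_ne v x
      · rwa [Finset.erase_insert_of_ne hvt.symm, Finset.erase_insert hvγ]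
      · rw [Finset.erase_insert_of_ne hxt, Finset.erase_insert_of_ne hxv]
        exact ih _ (Finset.erase_ssubset (by grind)) (by grind) (by grind)
          (mem_faces_of_subset htK (by grind) (by simp))
          (mem_faces_of_subset hvK (by grind) (by simp))
    have hle := h.card_le htK
    rw [Finset.card_insert_of_notMem htγ] at hle
    obtain hγ | hγ | hγ | hγ : γ.card = 0 ∨ γ.card = 1 ∨ γ.card = 2 ∨ γ.card = 3 := by lia
    · rw [Finset.card_eq_zero.mp hγ]
      exact htv.symm
    · obtain ⟨x, rfl⟩ := Finset.card_eq_one.mp hγ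
      have hx : x ∈ (K.lk {t}).vertexSet :=
        mem_vertexSet_lk_singleton.mpr ⟨by grind, VertAdj.symm htK⟩
      have := (vertAdj_lk_singleton.mp (hdom x hx (by grind))).2.2
      rwa [Finset.pair_comm v x]
    · exact htet _ (by rw [hc, hγ]) hproper
    · have := h.deg_le_of_properFaces_subset three_pos hproper (by rw [hc, hγ]) htv.right
      lia

theorem IsLinkNormal.deg_lk_add_two_le (h : K.IsLinkNormal 3)
    (htet : ∀ s : Finset ℕ, s.card = 4 → properFaces s ⊆ K.faces → s ∈ K.faces)
    (hcontr : ∀ K' : SComplex, K'.IsLinkNormal 3 → EdgeContraction K K' → K.g2 ≤ K'.g2)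
    (hdeg : 5 ≤ K.deg {t}) (hv : {v} ∈ (K.lk {t}).faces) :
    (K.lk {t}).deg {v} + 2 ≤ K.deg {t} := by
  by_contra! hlt
  obtain ⟨w, hw⟩ := K.exists_fresh
  have hvL := mem_vertexSet.mpr hv
  have hlk : ((K.lk {t}).lk {v}).vertexSet = (K.lk {t}).vertexSet.erase v := by
    refine Finset.eq_of_subset_of_card_le ((K.lk {t}).vertexSet_lk_subset_erase v) ?_
    rw [Finset.card_erase_of_mem hvL, ← fnum_zero, ← fnum_zero]
    exact Nat.sub_le_of_le_add (Nat.le_of_lt_succ hlt)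
  have hc : K.IsContractible 3 t v w := h.isContractible_of_dominating htet hdeg hvL
    (fun x hx hxv ↦ (mem_vertexSet_lk_singleton.mp (hlk ▸ Finset.mem_erase.mpr ⟨hxv, hx⟩)).2) hw
  have hdeg_edge : (K.lk {t}).deg {v} = K.deg {t, v} := by
    rw [deg_lk (Finset.disjoint_singleton.mpr hc.ne.symm), Finset.union_comm]
    rfl
  exact (hc.g2_mergeVertices_lt (by lia)).not_ge
    (hcontr _ hc.isLinkNormal_mergeVertices ⟨t, v, hc.edgeContractionAt⟩)

end Contraction

theorem statement8_general {K : SComplex} {t : ℕ} (hK : K.IsNormalPseudomanifold 3)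
    (htet : ∀ s : Finset ℕ, s.card = 4 → (∀ u ∈ properFaces s, u ∈ K.faces) → s ∈ K.faces)
    (hcontr : ∀ K' : SComplex, K'.IsNormalPseudomanifold 3 → EdgeContraction K K' → K.g2 ≤ K'.g2)
    (ht : K.IsSingular t) : 8 ≤ K.deg {t} := by
  by_contra! hlt
  have h := hK.isLinkNormal
  have hL : (K.lk {t}).IsLinkNormal 2 := IsLinkNormal.lk (d := 2) h ht.1
  have hn : (K.lk {t}).vertexSet.card ≤ 7 := by
    rw [← fnum_zero]
    exact Nat.le_of_lt_succ hlt
  have hχ : 2 ≤ (K.lk {t}).euler := hL.two_le_euler hn fun h5 v hv ↦ by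
    rw [← fnum_zero] at h5 ⊢
    exact h.deg_lk_add_two_le htet (fun K' h' ↦ hcontr K' h'.isNormalPseudomanifold) h5 hv
  exact ht.2 (hL.nonempty_homeomorph_sphere hχ (by lia))

/-- Lemma 3.9: in the class `R` with exactly one singular vertex `t`, `d(t) ≥ 8`. -/
theorem statement8 (K : SComplex) (t : ℕ) (hK : InClassR K)
    (hsing : {v | K.IsSingular v} = {t}) : 8 ≤ K.deg {t} :=
  statement8_general hK.1 hK.2.2.2.1 (fun K' h' hc ↦ hK.2.2.2.2 K' h' (.inr (.inl hc)))
    (hsing.ge (Set.mem_singleton t))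

end SComplex
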